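/- Lemma 6.1 (integral manifolds near nondegenerate zeros of the averaged phase equation, abstract form): Let G : ℝ → ℝ be C¹ and 2π-periodic, Δ ∈ ℝ, and ϑ⁰ ∈ ℝ with G(ϑ⁰) = Δ and G′(ϑ⁰) ≠ 0. Consider the system dψ₂/dt = μ²(−Δ + G(ψ₂)) + μ⁴ S̃₁₁(ψ₂, βt, μ) + ε²μ² S̃₁₂(ψ₂, φ₂, βt, αt, μ, ε) + ε³μ S̃₁₃(ψ₂, φ₂, βt, αt, μ, ε), dφ₂/dt = α₀ + μ² S̄₂₁(ψ₂) + μ⁴ S̃₂₁(ψ₂, βt, μ) + ε²μ² S̃₂₂(ψ₂, φ₂, βt, αt, μ, ε) + ε³μ S̃₂₃(ψ₂, φ₂, βt, αt, μ, ε), where all functions S̄₂₁, S̃_{jk} are C¹, 2π-periodic in ψ₂, φ₂, βt, αt, and bounded together with their first derivatives uniformly in the parameters. Then there exist μ₀ > 0 and c₀ > 0 such that for all 0 < μ ≤ μ₀ and 0 < ε ≤ c₀ μ^{1/3} there exists an integral manifold ψ₂ = ϑ⁰ + v(φ₂, βt, αt, μ, ε) of this system, where v = μ² v₀(βt, μ)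 + ε² v₁(φ₂, βt, αt, μ, ε) + (ε³/μ) v₂(φ₂, βt, αt, μ, ε) with functions v₀, v₁, v₂ that are C¹, 2π-periodic in their angular arguments and bounded by a constant independent of μ, ε and α ≥ α₀. If G′(ϑ⁰) < 0 this manifold is exponentially stable: there exists δ₀ > 0 such that every solution with |ψ₂(t₀) − ϑ⁰| ≤ δ₀ approaches a solution on the manifold at rate 𝓛₂ e^{−μ²κ₂(t−t₀)} for t ≥ t₀; if G′(ϑ⁰) > 0 it is exponentially unstable: every nearby solution approaches a solution on the manifold at rate 𝓛₃ e^{μ²κ₃(t−t₀)} as t ≤ t₀ decreases, with constants 𝓛₂, 𝓛₃ ≥ 1, κ₂, κ₃ > 0 independent of α, μ, ε. -/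

import Mathlib

/-- Bounded together with the first derivative by `M`. -/
def BddWithDeriv {X : Type*} [NormedAddCommGroup X] [NormedSpace ℝ X]
    (S : X → ℝ) (M : ℝ) : Prop :=
  ∀ p : X, |S p| ≤ M ∧ ‖fderiv ℝ S p‖ ≤ M

/-- `2π`-periodicity in the first two arguments (the angles `ψ₂` and `βt`). -/
def Per2of3 (S : ℝ × ℝ × ℝ → ℝ) : Prop :=
  ∀ a b c : ℝ, S (a + 2 * Real.pi, b, c) = S (a, b, c) ∧
    S (a, b + 2 * Real.pi, c) = S (a, b, c)

/-- `2π`-periodicity in the first four arguments (the angles `ψ₂, φ₂, βt, αt`). -/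
def Per4of6 (S : ℝ × ℝ × ℝ × ℝ × ℝ × ℝ → ℝ) : Prop :=
  ∀ a b c d e f : ℝ,
    S (a + 2 * Real.pi, b, c, d, e, f) = S (a, b, c, d, e, f) ∧
    S (a, b + 2 * Real.pi, c, d, e, f) = S (a, b, c, d, e, f) ∧
    S (a, b, c + 2 * Real.pi, d, e, f) = S (a, b, c, d, e, f) ∧
    S (a, b, c, d + 2 * Real.pi, e, f) = S (a, b, c, d, e, f)

/-- `2π`-periodicity in the first three arguments (the angles `φ₂, βt, αt`). -/
def Per3of5 (S : ℝ × ℝ × ℝ × ℝ × ℝ → ℝ) : Prop :=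
  ∀ a b c d e : ℝ,
    S (a + 2 * Real.pi, b, c, d, e) = S (a, b, c, d, e) ∧
    S (a, b + 2 * Real.pi, c, d, e) = S (a, b, c, d, e) ∧
    S (a, b, c + 2 * Real.pi, d, e) = S (a, b, c, d, e)

/-- The right-hand side of the slow `ψ₂`-equation. -/
def RHSψ (G : ℝ → ℝ) (S11 : ℝ × ℝ × ℝ → ℝ) (S12 S13 : ℝ × ℝ × ℝ × ℝ × ℝ × ℝ → ℝ)
    (Δ α β μ ε : ℝ) (ψ φ t : ℝ) : ℝ :=
  μ^2 * (-Δ + G ψ) + μ^4 * S11 (ψ, β*t, μ)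
    + ε^2*μ^2 * S12 (ψ, φ, β*t, α*t, μ, ε) + ε^3*μ * S13 (ψ, φ, β*t, α*t, μ, ε)

/-- The right-hand side of the `φ₂`-equation. -/
def RHSφ (α₀ : ℝ) (S21bar : ℝ → ℝ) (S21 : ℝ × ℝ × ℝ → ℝ)
    (S22 S23 : ℝ × ℝ × ℝ × ℝ × ℝ × ℝ → ℝ) (α β μ ε : ℝ) (ψ φ t : ℝ) : ℝ :=
  α₀ + μ^2 * S21bar ψ + μ^4 * S21 (ψ, β*t, μ)
    + ε^2*μ^2 * S22 (ψ, φ, β*t, α*t, μ, ε) + ε^3*μ * S23 (ψ, φ, β*t, α*t, μ, ε)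

/-- The graph function `ϑ⁰ + v(φ₂, βt, αt, μ, ε)` of the integral manifold. -/
noncomputable def graphψ (ϑ0 : ℝ) (v₀ : ℝ × ℝ → ℝ) (v₁ v₂ : ℝ × ℝ × ℝ × ℝ × ℝ → ℝ)
    (α β μ ε : ℝ) (φ t : ℝ) : ℝ :=
  ϑ0 + (μ^2 * v₀ (β*t, μ) + ε^2 * v₁ (φ, β*t, α*t, μ, ε)
    + (ε^3/μ) * v₂ (φ, β*t, α*t, μ, ε))

/-!
Put `ψ₂ = ϑ⁰ + κ z` with a small `κ` and take `τ = -G'(ϑ⁰) μ² t` as time. The slow equation becomes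
`z' = -z + (small)`, and the angles `x = (φ₂, βt, αt)` move with a drift which may be fast but has a
small Lipschitz constant. The sign of `G'(ϑ⁰)` only decides whether `τ` runs forward or backward.

An invariant graph `z = w x` is a fixed point of the Lyapunov–Perron operator, a contraction of the
bounded `1`-Lipschitz functions. That `w` is `C¹` is seen without differentiating the operator: the
flow over one unit of time contracts the second differences of `w`, so its difference quotients are
equicontinuous. A trajectory in the strip `|z| ≤ ρ` approaches the graph like `exp (-7τ/8)`, and the
solutions on the graph which meet it at later and later times converge to its asymptotic phase.

The graphs of two nearby fields are compared through their vertical distance. Equality of the fields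
gives uniqueness, hence periodicity. Keeping only the terms of order `μ⁴` gives a graph depending on
`βt` alone, of order `μ²`; it is `μ² v₀`. The remaining terms change it by `O(ε² + ε³/μ)`, and
this difference is shared out with `v₁ = v₂`.
-/

section

open Real Set Filter Topology MeasureTheory
open scoped NNReal BoundedContinuousFunction

section LipschitzFlow

variable {E : Type*} [NormedAddCommGroup E] [NormedSpace ℝ E] {U : E → E} {K : ℝ≥0}

theorem norm_intervalIntegral_le_mul_cosh {f : ℝ → E} {C : ℝ} (hf : ∀ s, ‖f s‖ ≤ C * cosh s)
    (t : ℝ) : ‖∫ s in (0 : ℝ)..t, f s‖ ≤ C * cosh t := by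
  have hC : 0 ≤ C := by simpa using (norm_nonneg _).trans (hf 0)
  have integral_cosh : ∫ s in (0 : ℝ)..t, cosh s = sinh t := by
    simpa using intervalIntegral.integral_eq_sub_of_hasDerivAt
      (fun s _ => hasDerivAt_sinh s) (continuous_cosh.intervalIntegrable 0 t)
  have abs_sinh_le : |sinh t| ≤ cosh t := by
    rw [abs_le]
    constructor
    · linarith [cosh_add_sinh t, exp_pos t]
    · linarith [cosh_sub_sinh t, exp_pos (-t)]
  calc ‖∫ s in (0 : ℝ)..t, f s‖ ≤ |∫ s in (0 : ℝ)..t, C * cosh s| :=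
        intervalIntegral.norm_integral_le_abs_of_norm_le (.of_forall fun s => hf s)
          ((continuous_const.mul continuous_cosh).intervalIntegrable _ _)
    _ = C * |sinh t| := by
        rw [intervalIntegral.integral_const_mul, integral_cosh, abs_mul, abs_of_nonneg hC]
    _ ≤ C * cosh t := by gcongr

theorem continuous_comp_add_cosh_smul (hU : Continuous U) (x₀ : E) (y : ℝ →ᵇ E) :
    Continuous fun s => U (x₀ + cosh s • y s) := by
  have := y.continuous
  have := continuous_cosh
  fun_prop

theorem norm_comp_add_cosh_smul_le (hU : LipschitzWith K U) (x₀ : E) (y : ℝ →ᵇ E) (s : ℝ) :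
    ‖U (x₀ + cosh s • y s)‖ ≤ (‖U x₀‖ + K * ‖y‖) * cosh s := by
  have lipschitz : ‖U (x₀ + cosh s • y s) - U x₀‖ ≤ K * (cosh s * ‖y‖) := by
    refine (hU.norm_sub_le _ _).trans ?_
    rw [add_sub_cancel_left, norm_smul, norm_of_nonneg (cosh_pos s).le]
    have := y.norm_coe_le_norm s
    gcongr
  nlinarith [norm_le_norm_add_norm_sub' (U (x₀ + cosh s • y s)) (U x₀), one_le_cosh s,
    norm_nonneg (U x₀)]

/-- The Picard operator of `X' = U X`, `X 0 = x₀`, written for the unknown `y` in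
`X t = x₀ + cosh t • y t`. The weight `cosh` makes it a contraction on the whole real line as soon
as `U` is. -/
noncomputable def weightedPicard (hU : LipschitzWith K U) (x₀ : E) (y : ℝ →ᵇ E) : ℝ →ᵇ E :=
  .ofNormedAddCommGroup (fun t => (cosh t)⁻¹ • ∫ s in (0 : ℝ)..t, U (x₀ + cosh s • y s))
    ((continuous_cosh.inv₀ fun t => (cosh_pos t).ne').smul
      (intervalIntegral.continuous_primitive
        (fun a b => (continuous_comp_add_cosh_smul hU.continuous x₀ y).intervalIntegrable a b) 0))
    (‖U x₀‖ + K * ‖y‖) fun t => by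
      rw [norm_smul, norm_inv, norm_of_nonneg (cosh_pos t).le, inv_mul_le_iff₀ (cosh_pos t),
        mul_comm (cosh t)]
      exact norm_intervalIntegral_le_mul_cosh (norm_comp_add_cosh_smul_le hU x₀ y) t

theorem contractingWith_weightedPicard (hU : LipschitzWith K U) (hK : K < 1) (x₀ : E) :
    ContractingWith K (weightedPicard hU x₀) := by
  refine ⟨hK, LipschitzWith.of_dist_le_mul fun y y' => ?_⟩
  rw [BoundedContinuousFunction.dist_le (by positivity)]
  intro t
  have integrable := fun y : ℝ →ᵇ E =>
    (continuous_comp_add_cosh_smul hU.continuous x₀ y).intervalIntegrable (μ := volume) 0 t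
  have integrand_le (s : ℝ) :
      ‖U (x₀ + cosh s • y s) - U (x₀ + cosh s • y' s)‖ ≤ K * dist y y' * cosh s := by
    refine (hU.norm_sub_le _ _).trans ?_
    rw [add_sub_add_left_eq_sub, ← smul_sub, norm_smul, norm_of_nonneg (cosh_pos s).le,
      ← dist_eq_norm, mul_assoc, mul_comm (dist y y')]
    have := BoundedContinuousFunction.dist_coe_le_dist (f := y) (g := y') s
    gcongr
  simp only [weightedPicard, BoundedContinuousFunction.coe_ofNormedAddCommGroup]
  rw [dist_eq_norm, ← smul_sub, ← intervalIntegral.integral_sub (integrable y) (integrable y'),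
    norm_smul, norm_inv, norm_of_nonneg (cosh_pos t).le, inv_mul_le_iff₀ (cosh_pos t),
    mul_comm (cosh t)]
  exact norm_intervalIntegral_le_mul_cosh integrand_le t

variable [CompleteSpace E]

theorem exists_hasDerivAt_of_lipschitzWith_lt_one (hU : LipschitzWith K U) (hK : K < 1) (x₀ : E) :
    ∃ X : ℝ → E, X 0 = x₀ ∧ ∀ t, HasDerivAt X (U (X t)) t := by
  have hΦ := contractingWith_weightedPicard hU hK x₀
  set y := ContractingWith.fixedPoint _ hΦ
  have hy (t : ℝ) : cosh t • y t = ∫ s in (0 : ℝ)..t, U (x₀ + cosh s • y s) := by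
    have h : y t = (cosh t)⁻¹ • ∫ s in (0 : ℝ)..t, U (x₀ + cosh s • y s) :=
      congrArg (· t) hΦ.fixedPoint_isFixedPt.symm
    rw [h, smul_inv_smul₀ (cosh_pos t).ne']
  refine ⟨fun t => x₀ + cosh t • y t, by simpa using hy 0, fun t => ?_⟩
  have := ((continuous_comp_add_cosh_smul hU.continuous x₀ y).integral_hasStrictDerivAt 0
    t).hasDerivAt.const_add x₀
  rwa [← funext fun t => congrArg (x₀ + ·) (hy t)] at this

theorem exists_hasDerivAt_of_lipschitzWith (hU : LipschitzWith K U) (x₀ : E) :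
    ∃ X : ℝ → E, X 0 = x₀ ∧ ∀ t, HasDerivAt X (U (X t)) t := by
  set c : ℝ≥0 := K + 1
  have hc : (c : ℝ) ≠ 0 := by positivity
  have hV : LipschitzWith (c⁻¹ * K) fun x => (c : ℝ)⁻¹ • U x :=
    LipschitzWith.of_dist_le_mul fun x y => by
      rw [dist_smul₀, norm_of_nonneg (by positivity), NNReal.coe_mul, NNReal.coe_inv, mul_assoc]
      gcongr
      exact hU.dist_le_mul x y
  have hlt : c⁻¹ * K < 1 := by
    rw [inv_mul_lt_iff₀ (by positivity), mul_one]
    exact lt_add_one K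
  obtain ⟨Y, hY₀, hY⟩ := exists_hasDerivAt_of_lipschitzWith_lt_one hV hlt x₀
  refine ⟨fun t => Y (c * t), by simpa using hY₀, fun t => ?_⟩
  have := (hY (c * t)).scomp t ((hasDerivAt_id t).const_mul (c : ℝ))
  simpa [Function.comp_def, smul_smul, hc] using this

end LipschitzFlow

section Gronwall

variable {E : Type*} [NormedAddCommGroup E] [NormedSpace ℝ E]

theorem norm_le_gronwallBound_abs {f f' : ℝ → E} {K ε T : ℝ} (hf : ∀ s, HasDerivAt f (f' s) s)
    (bound : ∀ s, |s| ≤ T → ‖f' s‖ ≤ K * ‖f s‖ + ε) {s : ℝ} (hs : |s| ≤ T) :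
    ‖f s‖ ≤ gronwallBound ‖f 0‖ K ε |s| := by
  have forward {g g' : ℝ → E} (hg : ∀ s, HasDerivAt g (g' s) s)
      (bound : ∀ s, |s| ≤ T → ‖g' s‖ ≤ K * ‖g s‖ + ε) {s : ℝ} (h0 : 0 ≤ s) (hT : s ≤ T) :
      ‖g s‖ ≤ gronwallBound ‖g 0‖ K ε s := by
    simpa using norm_le_gronwallBound_of_norm_deriv_right_le (b := T)
      (fun x _ => (hg x).continuousAt.continuousWithinAt) (fun x _ => (hg x).hasDerivWithinAt)
      le_rfl (fun x hx => bound x (by simpa [abs_of_nonneg hx.1] using hx.2.le)) s ⟨h0, hT⟩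
  rcases le_total 0 s with h | h
  · rw [abs_of_nonneg h] at hs ⊢
    exact forward hf bound h hs
  · rw [abs_of_nonpos h] at hs ⊢
    have hneg (r : ℝ) : HasDerivAt (fun r => f (-r)) (-f' (-r)) r := by
      simpa [Function.comp_def] using (hf (-r)).scomp r (hasDerivAt_neg r)
    simpa using forward hneg (fun r hr => by simpa using bound (-r) (by simpa using hr))
      (neg_nonneg.2 h) hs

theorem norm_le_div_of_norm_deriv_le {f f' : ℝ → E} {k ν : ℝ} (hk : 0 < k) (hk' : k < 1)
    (hν : 0 ≤ ν) (hf : ∀ s, HasDerivAt f (f' s) s)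
    (bound : ∀ s, |s| ≤ 1 → ‖f' s‖ ≤ k * ‖f s‖ + ν) {s : ℝ} (hs : |s| ≤ 1) :
    ‖f s‖ ≤ (‖f 0‖ + ν) / (1 - k) := by
  have hexp : exp (k * |s|) ≤ 1 / (1 - k) :=
    (exp_le_exp.2 (mul_le_of_le_one_right hk.le hs)).trans
      (exp_bound_div_one_sub_of_interval hk.le hk')
  calc ‖f s‖ ≤ gronwallBound ‖f 0‖ k ν |s| := norm_le_gronwallBound_abs hf bound hs
    _ = ‖f 0‖ * exp (k * |s|) + ν / k * (exp (k * |s|) - 1) := gronwallBound_of_K_ne_0 hk.ne' ▸ rfl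
    _ ≤ ‖f 0‖ * (1 / (1 - k)) + ν / k * (1 / (1 - k) - 1) := by gcongr
    _ = (‖f 0‖ + ν) / (1 - k) := by
        have := (sub_pos.2 hk').ne'
        field_simp
        ring

theorem norm_sub_le_exp_mul_of_lipschitzWith {U : E → E} {K : ℝ≥0} (hU : LipschitzWith K U)
    {X Y : ℝ → E} (hX : ∀ t, HasDerivAt X (U (X t)) t) (hY : ∀ t, HasDerivAt Y (U (Y t)) t)
    (t : ℝ) : ‖X t - Y t‖ ≤ exp (K * |t|) * ‖X 0 - Y 0‖ := by
  have := norm_le_gronwallBound_abs (K := K) (ε := 0) (fun s => (hX s).sub (hY s))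
    (fun s _ => by simpa using hU.norm_sub_le (X s) (Y s)) (le_refl |t|)
  simpa [gronwallBound_ε0, mul_comm] using this

theorem norm_le_exp_mul_add_of_hasDerivAt_neg_add {D n : ℝ → E} {k ν a b : ℝ} (hk : k < 1)
    (hν : 0 ≤ ν) (hab : a ≤ b) (hD : ∀ s ∈ Icc a b, HasDerivAt D (-D s + n s) s)
    (hn : ∀ s ∈ Icc a b, ‖n s‖ ≤ k * ‖D s‖ + ν) :
    ‖D b‖ ≤ exp (-(1 - k) * (b - a)) * ‖D a‖ + ν / (1 - k) := by
  have hk' : 0 < 1 - k := sub_pos.2 hk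
  refine le_of_forall_pos_le_add fun η hη => ?_
  set β : ℝ → ℝ := fun s => exp (-(1 - k) * (s - a)) * ‖D a‖ + (ν / (1 - k) + η)
  have hβ (s : ℝ) : HasDerivAt (fun s => exp s * β s)
      (exp s * (k * β s + ν + (1 - k) * η)) s := by
    have := (hasDerivAt_exp s).mul ((((((hasDerivAt_id s).sub_const a).const_mul
      (-(1 - k))).exp).mul_const ‖D a‖).add_const (ν / (1 - k) + η))
    refine this.congr_deriv ?_
    simp only [β, id]
    field_simp
    ring
  have hg (s : ℝ) (hs : s ∈ Icc a b) : HasDerivAt (fun s => exp s • D s) (exp s • n s) s := by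
    refine ((hasDerivAt_exp s).smul (hD s hs)).congr_deriv ?_
    module
  have key := image_norm_le_of_norm_deriv_right_lt_deriv_boundary
    (fun s hs => (hg s hs).continuousAt.continuousWithinAt)
    (fun s hs => (hg s (Ico_subset_Icc_self hs)).hasDerivWithinAt)
    (by
      rw [norm_smul, norm_of_nonneg (exp_pos a).le]
      gcongr
      simp only [β, sub_self, mul_zero, exp_zero, one_mul]
      have : 0 ≤ ν / (1 - k) := by positivity
      linarith)
    hβ
    (fun s hs heq => by
      rw [norm_smul, norm_of_nonneg (exp_pos s).le] at heq ⊢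
      have := hn s (Ico_subset_Icc_self hs)
      rw [mul_left_cancel₀ (exp_pos s).ne' heq] at this
      gcongr
      have : 0 < (1 - k) * η := by positivity
      linarith) (right_mem_Icc.2 hab)
  rw [norm_smul, norm_of_nonneg (exp_pos b).le] at key
  simpa [β, add_assoc] using le_of_mul_le_mul_left key (exp_pos b)

theorem norm_le_div_of_hasDerivAt_neg_add {D n : ℝ → E} {k ν C t : ℝ} (hk : k < 1) (hν : 0 ≤ ν)
    (hD : ∀ s ≤ t, HasDerivAt D (-D s + n s) s) (hC : ∀ s ≤ t, ‖D s‖ ≤ C)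
    (hn : ∀ s ≤ t, ‖n s‖ ≤ k * ‖D s‖ + ν) : ‖D t‖ ≤ ν / (1 - k) := by
  have lim : Tendsto (fun a => exp (-(1 - k) * (t - a)) * C + ν / (1 - k)) atBot
      (𝓝 (0 * C + ν / (1 - k))) := by
    refine ((tendsto_exp_atBot.comp ?_).mul_const C).add_const _
    exact (tendsto_atTop_add_const_left _ t tendsto_neg_atBot_atTop).const_mul_atTop_of_neg
      (by linarith)
  rw [zero_mul, zero_add] at lim
  refine ge_of_tendsto lim ?_
  filter_upwards [eventually_le_atBot t] with a ha
  refine (norm_le_exp_mul_add_of_hasDerivAt_neg_add hk hν ha (fun s hs => hD s hs.2)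
    (fun s hs => hn s hs.2)).trans ?_
  gcongr
  exact hC a ha

end Gronwall

section DifferenceQuotients

variable {E F : Type*} [NormedAddCommGroup E] [NormedSpace ℝ E] [NormedAddCommGroup F]
  [NormedSpace ℝ F] {w : E → F}

theorem norm_fderiv_sub_fderiv_le {x y : E} {m : ℝ} (hm : 0 ≤ m) (hx : DifferentiableAt ℝ w x)
    (hy : DifferentiableAt ℝ w y) (h : ∀ v, ‖w (x + v) - w x - (w (y + v) - w y)‖ ≤ m * ‖v‖) :
    ‖fderiv ℝ w x - fderiv ℝ w y‖ ≤ m := by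
  have translate {z : E} (hz : DifferentiableAt ℝ w z) :
      HasFDerivAt (fun v => w (z + v) - w z) (fderiv ℝ w z) 0 := by
    have : HasFDerivAt w (fderiv ℝ w z) (z + 0) := by simpa using hz.hasFDerivAt
    simpa [Function.comp_def] using
      (this.comp (0 : E) ((hasFDerivAt_id (0 : E)).const_add z)).sub_const (w z)
  exact ((translate hx).sub (translate hy)).le_of_lip' hm (.of_forall fun v => by simpa using h v)

theorem hasFDerivAt_of_tendsto_of_norm_sub_le {x : E} {y : ℕ → E} {L : E →L[ℝ] F}
    (hy : ∀ n, DifferentiableAt ℝ w (y n)) (hyx : Tendsto y atTop (𝓝 x))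
    (hL : Tendsto (fun n => fderiv ℝ w (y n)) atTop (𝓝 L))
    (h : ∀ m > (0 : ℝ), ∃ δ > (0 : ℝ), ∀ x y v : E, ‖x - y‖ ≤ δ →
      ‖w (x + v) - w x - (w (y + v) - w y)‖ ≤ m * ‖v‖) :
    HasFDerivAt w L x := by
  rw [hasFDerivAt_iff_isLittleO_nhds_zero, Asymptotics.isLittleO_iff]
  intro c hc
  obtain ⟨δ, hδ, hquot⟩ := h (c / 3) (by positivity)
  obtain ⟨n, hn, hLn⟩ := ((hyx.eventually (Metric.closedBall_mem_nhds x hδ)).and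
    (hL.eventually (Metric.closedBall_mem_nhds L (by positivity : 0 < c / 3)))).exists
  rw [dist_comm, dist_eq_norm] at hn
  rw [dist_eq_norm] at hLn
  have hdiff := Asymptotics.isLittleO_iff.1
    (hasFDerivAt_iff_isLittleO_nhds_zero.1 (hy n).hasFDerivAt) (by positivity : 0 < c / 3)
  filter_upwards [hdiff] with v hv
  have hop := (fderiv ℝ w (y n) - L).le_of_opNorm_le hLn v
  calc ‖w (x + v) - w x - L v‖
      = ‖(w (x + v) - w x - (w (y n + v) - w (y n)))
          + (w (y n + v) - w (y n) - fderiv ℝ w (y n) v) + (fderiv ℝ w (y n) - L) v‖ := by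
        congr 1
        simp only [sub_apply]
        abel
    _ ≤ c / 3 * ‖v‖ + c / 3 * ‖v‖ + c / 3 * ‖v‖ :=
        norm_add_le_of_le (norm_add_le_of_le (hquot x (y n) v hn) hv) hop
    _ = c * ‖v‖ := by ring

/-- By Rademacher's theorem `w` is differentiable on a dense set, along which its derivatives
subconverge at every point; equicontinuity of the difference quotients turns the limits into
derivatives. -/
theorem contDiff_one_of_equicontinuous_slope [FiniteDimensional ℝ E] [FiniteDimensional ℝ F]
    {K : ℝ≥0} (hw : LipschitzWith K w)
    (h : ∀ m > (0 : ℝ), ∃ δ > (0 : ℝ), ∀ x y v : E, ‖x - y‖ ≤ δ →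
      ‖w (x + v) - w x - (w (y + v) - w y)‖ ≤ m * ‖v‖) :
    ContDiff ℝ 1 w := by
  have dense : Dense {x | DifferentiableAt ℝ w x} := by
    borelize E
    exact Measure.dense_of_ae (hw.ae_differentiableAt (μ := Measure.addHaar))
  have differentiable : Differentiable ℝ w := fun x => by
    obtain ⟨y, hy, hyx⟩ := mem_closure_iff_seq_limit.1 (dense x)
    obtain ⟨L, -, k, hk, hL⟩ := (isCompact_closedBall (0 : E →L[ℝ] F) K).tendsto_subseq
      (x := fun n => fderiv ℝ w (y n)) fun n => by simpa using norm_fderiv_le_of_lipschitz ℝ hw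
    exact (hasFDerivAt_of_tendsto_of_norm_sub_le (fun n => hy (k n))
      (hyx.comp hk.tendsto_atTop) hL h).differentiableAt
  refine contDiff_one_iff_fderiv.2 ⟨differentiable, Metric.continuous_iff.2 fun x e he => ?_⟩
  obtain ⟨δ, hδ, hquot⟩ := h (e / 2) (by positivity)
  refine ⟨δ, hδ, fun y hy => ?_⟩
  rw [dist_eq_norm] at hy ⊢
  exact (norm_fderiv_sub_fderiv_le (by positivity) (differentiable y) (differentiable x)
    fun v => hquot y x v hy.le).trans_lt (half_lt_self he)

end DifferenceQuotients

section FourPoint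

variable {E F : Type*} [NormedAddCommGroup E] [NormedSpace ℝ E] [NormedAddCommGroup F]
  [NormedSpace ℝ F] {f : E → F} {s : Set E} {ℓ : ℝ}

theorem exists_four_point_bound (hf : Differentiable ℝ f) (hs : Convex ℝ s)
    (hℓ : ∀ p ∈ s, ‖fderiv ℝ f p‖ ≤ ℓ) (hu : UniformContinuousOn (fderiv ℝ f) s) {e : ℝ}
    (he : 0 < e) :
    ∃ δ > (0 : ℝ), ∀ u₁ ∈ s, ∀ u₂ ∈ s, ∀ u₃ ∈ s, ∀ u₄ ∈ s, ‖u₁ - u₃‖ < δ → ‖u₂ - u₄‖ < δ →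
      ‖f u₁ - f u₂ - f u₃ + f u₄‖ ≤ ℓ * ‖u₁ - u₂ - u₃ + u₄‖ + e * ‖u₁ - u₂‖ := by
  obtain ⟨δ, hδ, hclose⟩ := Metric.uniformContinuousOn_iff.1 hu e he
  refine ⟨δ, hδ, fun u₁ h₁ u₂ h₂ u₃ h₃ u₄ h₄ h₁₃ h₂₄ => ?_⟩
  have hasDerivAt_segment (p q : E) (t : ℝ) : HasDerivAt (fun t : ℝ => f (AffineMap.lineMap p q t))
      (fderiv ℝ f (AffineMap.lineMap p q t) (q - p)) t :=
    (hf _).hasFDerivAt.comp_hasDerivAt t AffineMap.hasDerivAt_lineMap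
  have deriv_le (t : ℝ) (ht : t ∈ Ico (0 : ℝ) 1) :
      ‖fderiv ℝ f (AffineMap.lineMap u₂ u₁ t) (u₁ - u₂)
        - fderiv ℝ f (AffineMap.lineMap u₄ u₃ t) (u₃ - u₄)‖
        ≤ ℓ * ‖u₁ - u₂ - u₃ + u₄‖ + e * ‖u₁ - u₂‖ := by
    set P := AffineMap.lineMap u₂ u₁ t
    set Q := AffineMap.lineMap u₄ u₃ t
    have hP : P ∈ s := hs.lineMap_mem h₂ h₁ (Ico_subset_Icc_self ht)
    have hQ : Q ∈ s := hs.lineMap_mem h₄ h₃ (Ico_subset_Icc_self ht)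
    have hPQ : dist P Q < δ := by
      have hsub : P - Q = AffineMap.lineMap (u₂ - u₄) (u₁ - u₃) t := by
        simp only [P, Q, AffineMap.lineMap_apply_module]
        module
      rw [dist_eq_norm, hsub]
      exact mem_ball_zero_iff.1 ((convex_ball (0 : E) δ).lineMap_mem (mem_ball_zero_iff.2 h₂₄)
        (mem_ball_zero_iff.2 h₁₃) (Ico_subset_Icc_self ht))
    have hsplit : fderiv ℝ f P (u₁ - u₂) - fderiv ℝ f Q (u₃ - u₄)
        = fderiv ℝ f Q (u₁ - u₂ - u₃ + u₄) + (fderiv ℝ f P - fderiv ℝ f Q) (u₁ - u₂) := by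
      simp only [sub_apply, map_sub, map_add]
      abel
    rw [hsplit]
    refine norm_add_le_of_le ((fderiv ℝ f Q).le_of_opNorm_le (hℓ Q hQ) _)
      ((fderiv ℝ f P - fderiv ℝ f Q).le_of_opNorm_le ?_ _)
    rw [← dist_eq_norm]
    exact (hclose P hP Q hQ hPQ).le
  have key := norm_image_sub_le_of_norm_deriv_le_segment_01'
    (fun t _ => ((hasDerivAt_segment u₂ u₁ t).sub
      (hasDerivAt_segment u₄ u₃ t)).hasDerivWithinAt) deriv_le
  convert key using 2
  simp
  abel

end FourPoint

section ExponentialIntegral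

theorem ae_norm_exp_mul_le {f : ℝ → ℝ} {a c : ℝ} (bound : ∀ s ≤ 0, |f s| ≤ c * exp (-a * s)) :
    ∀ᵐ s ∂volume.restrict (Iic 0), ‖exp s * f s‖ ≤ c * exp ((1 - a) * s) :=
  (ae_restrict_iff' measurableSet_Iic).2 <| .of_forall fun s hs => by
    calc ‖exp s * f s‖ = exp s * |f s| := by rw [norm_mul, norm_eq_abs, norm_eq_abs, abs_exp]
      _ ≤ exp s * (c * exp (-a * s)) := by gcongr; exact bound s hs
      _ = c * exp ((1 - a) * s) := by rw [mul_left_comm, ← exp_add]; ring_nf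

theorem integrableOn_exp_mul_of_abs_le {f : ℝ → ℝ} {a c : ℝ} (ha : a < 1) (hf : Continuous f)
    (bound : ∀ s ≤ 0, |f s| ≤ c * exp (-a * s)) :
    IntegrableOn (fun s => exp s * f s) (Iic 0) :=
  ((integrableOn_exp_mul_Iic (sub_pos.2 ha) 0).const_mul c).mono'
    (continuous_exp.mul hf).aestronglyMeasurable (ae_norm_exp_mul_le bound)

theorem abs_integral_exp_mul_le {f : ℝ → ℝ} {a c : ℝ} (ha : a < 1)
    (bound : ∀ s ≤ 0, |f s| ≤ c * exp (-a * s)) :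
    |∫ s in Iic 0, exp s * f s| ≤ c / (1 - a) := by
  rw [← norm_eq_abs]
  calc ‖∫ s in Iic 0, exp s * f s‖ ≤ ∫ s in Iic 0, c * exp ((1 - a) * s) :=
        norm_integral_le_of_norm_le ((integrableOn_exp_mul_Iic (sub_pos.2 ha) 0).const_mul c)
          (ae_norm_exp_mul_le bound)
    _ = c / (1 - a) := by
        rw [integral_const_mul, integral_exp_mul_Iic (sub_pos.2 ha)]
        simp [div_eq_mul_inv]

theorem hasDerivAt_integral_exp_mul_comp_add {n : ℝ → ℝ} {C : ℝ} (hn : Continuous n)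
    (hC : ∀ s, |n s| ≤ C) (t : ℝ) :
    HasDerivAt (fun t => ∫ s in Iic 0, exp s * n (s + t))
      (-(∫ s in Iic 0, exp s * n (s + t)) + n t) t := by
  have continuous_integrand : Continuous fun s => exp s * n s := continuous_exp.mul hn
  have integrable (t : ℝ) : IntegrableOn (fun s => exp s * n s) (Iic t) := by
    have h0 : IntegrableOn (fun s => exp s * n s) (Iic 0) :=
      integrableOn_exp_mul_of_abs_le (a := 0) one_pos hn fun s _ => by simpa using hC s
    have hIcc : IntegrableOn (fun s => exp s * n s) (Icc 0 t) :=
      continuous_integrand.continuousOn.integrableOn_Icc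
    refine (h0.union hIcc).mono_set fun s hs => ?_
    rcases le_total s 0 with h | h
    exacts [Or.inl h, Or.inr ⟨h, hs⟩]
  have shift (t : ℝ) : ∫ s in Iic 0, exp s * n (s + t)
      = exp (-t) * ((∫ s in Iic 0, exp s * n s) + ∫ s in (0 : ℝ)..t, exp s * n s) := by
    rw [← intervalIntegral.integral_Iic_sub_Iic (integrable 0) (integrable t), add_sub_cancel,
      ← (measurePreserving_add_right (volume : Measure ℝ) t).setIntegral_preimage_emb
        (measurableEmbedding_addRight t) (fun s => exp s * n s) (Iic t), ← integral_const_mul]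
    simp only [← mul_assoc, ← exp_add]
    congr 2
    · ext s
      simp
    · ext s
      ring_nf
  rw [funext shift, shift t]
  refine ((hasDerivAt_neg t).exp.mul
    ((continuous_integrand.integral_hasStrictDerivAt 0 t).hasDerivAt.const_add
      (∫ s in Iic 0, exp s * n s))).congr_deriv ?_
  have : exp (-t) * (exp t * n t) = n t := by rw [← mul_assoc, ← exp_add]; simp
  linear_combination this

end ExponentialIntegral

section AdmissibleGraph

/-- The strip of half-width `ρ` around the invariant plane `z = 0` of the linear flow `z' = -z`,
`x' = 0` on `ℝ × E`. -/
def strip (E : Type*) (ρ : ℝ) : Set (ℝ × E) := {p | |p.1| ≤ ρ}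

variable {E : Type*} [NormedAddCommGroup E]

/-- The class of functions whose graphs compete for being the invariant manifold. The Lipschitz
constant `1` makes `x ↦ (w x, x)` nonexpansive for the sup norm of `ℝ × E`. -/
structure AdmissibleGraph (ρ : ℝ) (w : E → ℝ) : Prop where
  abs_le : ∀ x, |w x| ≤ ρ
  lipschitzWith : LipschitzWith 1 w

namespace AdmissibleGraph

variable {ρ : ℝ} {w w' : E → ℝ}

theorem mem_strip (hw : AdmissibleGraph ρ w) (x : E) : (w x, x) ∈ strip E ρ := hw.abs_le x

theorem abs_sub_le (hw : AdmissibleGraph ρ w) (x y : E) : |w x - w y| ≤ ‖x - y‖ := by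
  simpa using hw.lipschitzWith.norm_sub_le x y

theorem norm_graph_sub_le (hw : AdmissibleGraph ρ w) {d : ℝ} (hd : ∀ x, |w x - w' x| ≤ d)
    (x y : E) : ‖(w x, x) - (w' y, y)‖ ≤ ‖x - y‖ + d := by
  refine max_le ?_ (le_add_of_nonneg_right ((abs_nonneg _).trans (hd x)))
  calc |w x - w' y| ≤ |w x - w y| + |w y - w' y| := _root_.abs_sub_le _ _ _
    _ ≤ ‖x - y‖ + d := add_le_add (hw.abs_sub_le x y) (hd y)

theorem lipschitzWith_graph (hw : AdmissibleGraph ρ w) : LipschitzWith 1 fun x => (w x, x) :=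
  LipschitzWith.mk_one fun x y => by
    simpa [dist_eq_norm] using hw.norm_graph_sub_le (w' := w) (d := 0) (by simp) x y

end AdmissibleGraph

end AdmissibleGraph

section StripPerturbation

variable {E : Type*} [NormedAddCommGroup E] [NormedSpace ℝ E]

theorem convex_strip (ρ : ℝ) : Convex ℝ (strip E ρ) := by
  have : strip E ρ = Metric.closedBall (0 : ℝ) ρ ×ˢ univ := by
    ext p
    simp [strip]
  rw [this]
  exact (convex_closedBall _ _).prod convex_univ

/-- `F` is an admissible perturbation of the linear flow on the strip of half-width `ρ`: the system
under study is `z' = -z + (F (z, x)).1`, `x' = (F (z, x)).2`. The Lipschitz constant `1 / 16`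
leaves room for all gap conditions; the component `(F p).2` itself may be large. -/
structure StripPerturbation (F : ℝ × E → ℝ × E) (ρ : ℝ) : Prop where
  radius_pos : 0 < ρ
  contDiff : ContDiff ℝ 1 F
  norm_fderiv_le : ∀ p ∈ strip E ρ, ‖fderiv ℝ F p‖ ≤ 1 / 16
  uniformContinuousOn_fderiv : UniformContinuousOn (fderiv ℝ F) (strip E ρ)
  abs_fst_zero_le : ∀ x, |(F (0, x)).1| ≤ ρ / 2

/-- `X` is the base component of a motion along the graph of `w`. -/
def IsBaseTrajectory (F : ℝ × E → ℝ × E) (w : E → ℝ) (X : ℝ → E) : Prop :=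
  ∀ t, HasDerivAt X (F (w (X t), X t)).2 t

/-- The graph of `w` consists of whole trajectories of the system `z' = -z + (F (z, x)).1`,
`x' = (F (z, x)).2`. -/
def IsInvariantGraph (F : ℝ × E → ℝ × E) (w : E → ℝ) : Prop :=
  ∀ X, IsBaseTrajectory F w X →
    ∀ t, HasDerivAt (fun s => w (X s)) (-w (X t) + (F (w (X t), X t)).1) t

namespace StripPerturbation

variable {F : ℝ × E → ℝ × E} {ρ : ℝ} {w w' : E → ℝ}

theorem norm_sub_le (h : StripPerturbation F ρ) {p q : ℝ × E} (hp : p ∈ strip E ρ)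
    (hq : q ∈ strip E ρ) : ‖F p - F q‖ ≤ 1 / 16 * ‖p - q‖ :=
  (convex_strip ρ).norm_image_sub_le_of_norm_fderiv_le
    (fun p _ => h.contDiff.differentiable one_ne_zero p) h.norm_fderiv_le hq hp

theorem abs_fst_le (h : StripPerturbation F ρ) {p : ℝ × E} (hp : p ∈ strip E ρ) :
    |(F p).1| ≤ 3 / 4 * ρ := by
  have hzero : (0, p.2) ∈ strip E ρ := by simpa [strip] using h.radius_pos.le
  have hdist : ‖p - (0, p.2)‖ ≤ ρ := by simpa [Prod.norm_def, strip] using hp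
  have hlip : |(F p).1 - (F (0, p.2)).1| ≤ 1 / 16 * ‖p - (0, p.2)‖ :=
    (norm_fst_le _).trans (h.norm_sub_le hp hzero)
  linarith [abs_sub_abs_le_abs_sub (F p).1 (F (0, p.2)).1, h.abs_fst_zero_le p.2, h.radius_pos]

theorem norm_graph_sub_le (h : StripPerturbation F ρ) (hw : AdmissibleGraph ρ w)
    (hw' : AdmissibleGraph ρ w') {d : ℝ} (hd : ∀ x, |w x - w' x| ≤ d) (x y : E) :
    ‖F (w x, x) - F (w' y, y)‖ ≤ 1 / 16 * (‖x - y‖ + d) :=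
  (h.norm_sub_le (hw.mem_strip x) (hw'.mem_strip y)).trans
    (mul_le_mul_of_nonneg_left (hw.norm_graph_sub_le hd x y) (by norm_num))

theorem lipschitzWith_graph (h : StripPerturbation F ρ) (hw : AdmissibleGraph ρ w) :
    LipschitzWith (1 / 16) fun x => F (w x, x) :=
  LipschitzWith.of_dist_le_mul fun x y => by
    simpa [dist_eq_norm] using h.norm_graph_sub_le hw hw (d := 0) (by simp) x y

theorem lipschitzWith_base (h : StripPerturbation F ρ) (hw : AdmissibleGraph ρ w) :
    LipschitzWith (1 / 16) fun x => (F (w x, x)).2 := by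
  simpa [Function.comp_def] using LipschitzWith.prod_snd.comp (h.lipschitzWith_graph hw)

theorem norm_baseTrajectory_sub_le (h : StripPerturbation F ρ) (hw : AdmissibleGraph ρ w)
    {X Y : ℝ → E} (hX : IsBaseTrajectory F w X) (hY : IsBaseTrajectory F w Y) (s : ℝ) :
    ‖X s - Y s‖ ≤ exp (1 / 16 * |s|) * ‖X 0 - Y 0‖ := by
  simpa using norm_sub_le_exp_mul_of_lipschitzWith (h.lipschitzWith_base hw) hX hY s

theorem continuous_fst_comp (h : StripPerturbation F ρ) (hw : AdmissibleGraph ρ w) {X : ℝ → E}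
    (hX : IsBaseTrajectory F w X) : Continuous fun s => (F (w (X s), X s)).1 :=
  continuous_fst.comp ((h.lipschitzWith_graph hw).continuous.comp
    (continuous_iff_continuousAt.2 fun t => (hX t).continuousAt))

section LyapunovPerron

variable [CompleteSpace E]

theorem exists_baseTrajectory (h : StripPerturbation F ρ) (hw : AdmissibleGraph ρ w) (x : E) :
    ∃ X, X 0 = x ∧ IsBaseTrajectory F w X :=
  exists_hasDerivAt_of_lipschitzWith (h.lipschitzWith_base hw) x

/-- The motion along the graph of `w` whose base point at time `0` is `x`. -/
noncomputable def baseTrajectory (h : StripPerturbation F ρ) (hw : AdmissibleGraph ρ w) (x : E) :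
    ℝ → E :=
  (h.exists_baseTrajectory hw x).choose

theorem baseTrajectory_zero (h : StripPerturbation F ρ) (hw : AdmissibleGraph ρ w) (x : E) :
    h.baseTrajectory hw x 0 = x :=
  (h.exists_baseTrajectory hw x).choose_spec.1

theorem isBaseTrajectory_baseTrajectory (h : StripPerturbation F ρ) (hw : AdmissibleGraph ρ w)
    (x : E) : IsBaseTrajectory F w (h.baseTrajectory hw x) :=
  (h.exists_baseTrajectory hw x).choose_spec.2

theorem baseTrajectory_eq (h : StripPerturbation F ρ) (hw : AdmissibleGraph ρ w) {X : ℝ → E}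
    (hX : IsBaseTrajectory F w X) (t s : ℝ) : h.baseTrajectory hw (X t) s = X (s + t) := by
  have := h.norm_baseTrajectory_sub_le hw (h.isBaseTrajectory_baseTrajectory hw (X t))
    (fun s => (hX (s + t)).comp_add_const s t) s
  simp only [baseTrajectory_zero, zero_add, sub_self, norm_zero, mul_zero] at this
  exact sub_eq_zero.1 (norm_le_zero_iff.1 this)

/-- The Lyapunov–Perron transform of `w`: its value at `x` is the value at time `0` of the only
bounded solution of `z' = -z + (F (w X, X)).1`, where `X` moves along the graph of `w` from `x`. -/
noncomputable def lyapunovPerron (h : StripPerturbation F ρ) (hw : AdmissibleGraph ρ w) (x : E) :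
    ℝ :=
  ∫ s in Iic 0,
    exp s * (F (w (h.baseTrajectory hw x s), h.baseTrajectory hw x s)).1

theorem abs_lyapunovPerron_sub_le (h : StripPerturbation F ρ) (hw : AdmissibleGraph ρ w)
    (hw' : AdmissibleGraph ρ w') {x y : E} {c d : ℝ} (hd : ∀ x, |w x - w' x| ≤ d)
    (hdist : ∀ s ≤ 0, ‖h.baseTrajectory hw x s - h.baseTrajectory hw' y s‖ + d
      ≤ c * exp (-(1 / 16) * s)) :
    |h.lyapunovPerron hw x - h.lyapunovPerron hw' y| ≤ 1 / 15 * c := by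
  have continuous {w} (hw : AdmissibleGraph ρ w) (x : E) :=
    h.continuous_fst_comp hw (h.isBaseTrajectory_baseTrajectory hw x)
  have integrable {w} (hw : AdmissibleGraph ρ w) (x : E) :=
    integrableOn_exp_mul_of_abs_le (a := 0) (c := 3 / 4 * ρ) one_pos (continuous hw x) fun s _ => by
      simpa using h.abs_fst_le (hw.mem_strip _)
  rw [lyapunovPerron, lyapunovPerron, ← integral_sub (integrable hw x) (integrable hw' y)]
  simp only [← mul_sub]
  refine (abs_integral_exp_mul_le (a := 1 / 16) (c := 1 / 16 * c) (by norm_num)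
    fun s hs => ?_).trans_eq (by ring)
  refine (norm_fst_le _).trans ((h.norm_graph_sub_le hw hw' hd _ _).trans ?_)
  rw [mul_assoc]
  gcongr
  exact hdist s hs

theorem admissibleGraph_lyapunovPerron (h : StripPerturbation F ρ) (hw : AdmissibleGraph ρ w) :
    AdmissibleGraph ρ (h.lyapunovPerron hw) where
  abs_le x := by
    refine (abs_integral_exp_mul_le (a := 0) (c := 3 / 4 * ρ) one_pos fun s _ => by
      simpa using h.abs_fst_le (hw.mem_strip _)).trans ?_
    linarith [h.radius_pos]
  lipschitzWith := LipschitzWith.mk_one fun x y => by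
    rw [dist_eq_norm, dist_eq_norm, norm_eq_abs]
    refine (h.abs_lyapunovPerron_sub_le hw hw (c := ‖x - y‖) (d := 0) (by simp)
      fun s hs => ?_).trans (by linarith [norm_nonneg (x - y)])
    have := h.norm_baseTrajectory_sub_le hw (h.isBaseTrajectory_baseTrajectory hw x)
      (h.isBaseTrajectory_baseTrajectory hw y) s
    rw [baseTrajectory_zero, baseTrajectory_zero, abs_of_nonpos hs] at this
    rw [add_zero, mul_comm]
    convert this using 3
    ring

theorem norm_baseTrajectory_sub_add_le (h : StripPerturbation F ρ) (hw : AdmissibleGraph ρ w)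
    (hw' : AdmissibleGraph ρ w') {d : ℝ} (hd : ∀ x, |w x - w' x| ≤ d) (x : E) (s : ℝ) :
    ‖h.baseTrajectory hw x s - h.baseTrajectory hw' x s‖ + d ≤ d * exp (1 / 16 * |s|) := by
  have := norm_le_gronwallBound_abs (K := 1 / 16) (ε := 1 / 16 * d)
    (fun s => (h.isBaseTrajectory_baseTrajectory hw x s).sub
      (h.isBaseTrajectory_baseTrajectory hw' x s))
    (fun s _ => ((norm_snd_le _).trans (h.norm_graph_sub_le hw hw' hd _ _)).trans_eq
      (mul_add _ _ _)) (le_refl |s|)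
  rw [gronwallBound_of_K_ne_0 (by norm_num)] at this
  simp only [Pi.sub_apply, baseTrajectory_zero, sub_self, norm_zero, zero_mul, zero_add] at this
  linarith

theorem exists_lyapunovPerron_eq (h : StripPerturbation F ρ) :
    ∃ (w : E → ℝ) (hw : AdmissibleGraph ρ w), h.lyapunovPerron hw = w := by
  let toBCF {w : E → ℝ} (hw : AdmissibleGraph ρ w) : E →ᵇ ℝ :=
    .ofNormedAddCommGroup w hw.lipschitzWith.continuous ρ hw.abs_le
  let T : {w : E →ᵇ ℝ // AdmissibleGraph ρ w} → {w : E →ᵇ ℝ // AdmissibleGraph ρ w} := fun w =>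
    ⟨toBCF (h.admissibleGraph_lyapunovPerron w.2), h.admissibleGraph_lyapunovPerron w.2⟩
  have contracting : ContractingWith (1 / 15) T := by
    refine ⟨by norm_num [← NNReal.coe_lt_coe], LipschitzWith.of_dist_le_mul fun w w' => ?_⟩
    rw [Subtype.dist_eq, Subtype.dist_eq, BoundedContinuousFunction.dist_le (by positivity)]
    intro x
    change |h.lyapunovPerron w.2 x - h.lyapunovPerron w'.2 x| ≤ _
    simpa using h.abs_lyapunovPerron_sub_le w.2 w'.2
      (fun y => BoundedContinuousFunction.dist_coe_le_dist (f := w.1) (g := w'.1) y) fun s hs => by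
        simpa [abs_of_nonpos hs] using h.norm_baseTrajectory_sub_add_le w.2 w'.2
          (fun y => BoundedContinuousFunction.dist_coe_le_dist (f := w.1) (g := w'.1) y) x s
  have closed : IsClosed {w : E →ᵇ ℝ | AdmissibleGraph ρ w} := by
    have : {w : E →ᵇ ℝ | AdmissibleGraph ρ w}
        = {w | ∀ x, |w x| ≤ ρ} ∩ {w | ∀ x y, dist (w x) (w y) ≤ dist x y} := by
      ext w
      exact ⟨fun hw => ⟨hw.abs_le, fun x y => by simpa using hw.lipschitzWith.dist_le_mul x y⟩,
        fun hw => ⟨hw.1, LipschitzWith.mk_one hw.2⟩⟩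
    have continuous_eval (x : E) := (BoundedContinuousFunction.lipschitz_eval_const
      (β := ℝ) x).continuous
    simp only [this, Set.ofPred_forall]
    exact (isClosed_iInter fun x => isClosed_le (continuous_eval x).abs continuous_const).inter
      (isClosed_iInter fun x => isClosed_iInter fun y =>
        isClosed_le ((continuous_eval x).dist (continuous_eval y)) continuous_const)
  have : CompleteSpace {w : E →ᵇ ℝ // AdmissibleGraph ρ w} := closed.completeSpace_coe
  have : Nonempty {w : E →ᵇ ℝ // AdmissibleGraph ρ w} :=
    ⟨0, fun _ => by simpa using h.radius_pos.le, LipschitzWith.const' 0⟩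
  exact ⟨_, (ContractingWith.fixedPoint T contracting).2,
    congrArg (fun w : {w : E →ᵇ ℝ // AdmissibleGraph ρ w} => ⇑w.1)
      contracting.fixedPoint_isFixedPt⟩

theorem isInvariantGraph_of_lyapunovPerron_eq (h : StripPerturbation F ρ)
    (hw : AdmissibleGraph ρ w) (hfix : h.lyapunovPerron hw = w) : IsInvariantGraph F w := by
  intro X hX t
  have hwX (t : ℝ) :
      w (X t) = ∫ s in Iic 0, exp s * (F (w (X (s + t)), X (s + t))).1 := by
    conv_lhs => rw [← hfix]
    simp only [lyapunovPerron, h.baseTrajectory_eq hw hX]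
  have := hasDerivAt_integral_exp_mul_comp_add (h.continuous_fst_comp hw hX)
    (fun s => h.abs_fst_le (hw.mem_strip (X s))) t
  rwa [← funext hwX, ← hwX t] at this

theorem exists_isInvariantGraph (h : StripPerturbation F ρ) :
    ∃ w, AdmissibleGraph ρ w ∧ IsInvariantGraph F w :=
  let ⟨w, hw, hfix⟩ := h.exists_lyapunovPerron_eq
  ⟨w, hw, h.isInvariantGraph_of_lyapunovPerron_eq hw hfix⟩

end LyapunovPerron

end StripPerturbation

end StripPerturbation

section Smoothness

variable {E : Type*} [NormedAddCommGroup E]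

/-- For two pairs of nearby points, the second difference of `w` exceeds that of the points by at
most `m` times the distance within a pair. Smallness of `m` expresses equicontinuity of the slopes
of `w`. -/
def SecondDifferenceLE (w : E → ℝ) (m : ℝ) : Prop :=
  ∃ δ > 0, ∀ x₁ x₂ x₃ x₄ : E, ‖x₁ - x₃‖ ≤ δ → ‖x₂ - x₄‖ ≤ δ →
    |w x₁ - w x₂ - w x₃ + w x₄| ≤ ‖x₁ - x₂ - x₃ + x₄‖ + m * ‖x₁ - x₂‖

theorem AdmissibleGraph.secondDifferenceLE_two {ρ : ℝ} {w : E → ℝ} (hw : AdmissibleGraph ρ w) :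
    SecondDifferenceLE w 2 := by
  refine ⟨1, one_pos, fun x₁ x₂ x₃ x₄ _ _ => ?_⟩
  have triangle : ‖x₃ - x₄‖ ≤ ‖x₁ - x₂ - x₃ + x₄‖ + ‖x₁ - x₂‖ := by
    rw [add_comm, show x₃ - x₄ = x₁ - x₂ - (x₁ - x₂ - x₃ + x₄) by abel]
    exact _root_.norm_sub_le _ _
  calc |w x₁ - w x₂ - w x₃ + w x₄| = |w x₁ - w x₂ - (w x₃ - w x₄)| := by ring_nf
    _ ≤ |w x₁ - w x₂| + |w x₃ - w x₄| := abs_sub _ _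
    _ ≤ ‖x₁ - x₂‖ + ‖x₃ - x₄‖ := add_le_add (hw.abs_sub_le _ _) (hw.abs_sub_le _ _)
    _ ≤ ‖x₁ - x₂ - x₃ + x₄‖ + 2 * ‖x₁ - x₂‖ := by linarith

variable [NormedSpace ℝ E]

theorem SecondDifferenceLE.contDiff [FiniteDimensional ℝ E] {w : E → ℝ} {K : ℝ≥0}
    (hw : LipschitzWith K w) (h : ∀ m > 0, SecondDifferenceLE w m) : ContDiff ℝ 1 w :=
  contDiff_one_of_equicontinuous_slope hw fun m hm => by
    obtain ⟨δ, hδ, bound⟩ := h m hm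
    refine ⟨δ, hδ, fun x y v hxy => ?_⟩
    have := bound (x + v) x (y + v) y (by simpa using hxy) hxy
    rw [show x + v - x - (y + v) + y = 0 by abel, norm_zero, zero_add, add_sub_cancel_left] at this
    rw [norm_eq_abs]
    convert this using 2
    ring

theorem norm_le_add_of_hasDerivAt_neg_add_secondDifference {D : ℝ → ℝ} {A : ℝ → E} {n : ℝ → ℝ × E}
    {B : ℝ} (hB : 0 ≤ B) (hD : ∀ s, HasDerivAt D (-D s + (n s).1) s)
    (hA : ∀ s, HasDerivAt A (n s).2 s) (hn : ∀ s, |s| ≤ 1 → ‖n s‖ ≤ 1 / 16 * ‖A s‖ + 2 / 15 * B)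
    (hDA : ∀ s, |s| ≤ 1 → |D s| ≤ ‖A s‖ + 16 / 15 * B) : |D 0| ≤ ‖A 0‖ + 3 / 4 * B := by
  have growth (s : ℝ) (hs : |s| ≤ 1) : ‖A s‖ ≤ 16 / 15 * (‖A 0‖ + 2 / 15 * B) :=
    (norm_le_div_of_norm_deriv_le (by norm_num) (by norm_num) (by positivity) hA
      (fun s hs => (norm_snd_le _).trans (hn s hs)) hs).trans_eq (by ring)
  have decay := norm_le_exp_mul_add_of_hasDerivAt_neg_add (k := 0) (D := D) (n := fun s => (n s).1)
    (ν := 1 / 16 * (16 / 15 * (‖A 0‖ + 2 / 15 * B)) + 2 / 15 * B) one_pos (by positivity)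
    (show (-1 : ℝ) ≤ 0 by norm_num) (fun s _ => hD s) fun s hs => by
      have hs' : |s| ≤ 1 := abs_le.2 ⟨hs.1, hs.2.trans zero_le_one⟩
      linarith [(norm_fst_le _).trans (hn s hs'), growth s hs']
  have exp_neg_one_le : exp (-1) ≤ 1 / 2 := by
    rw [exp_neg, ← one_div]
    exact one_div_le_one_div_of_le two_pos (by linarith [add_one_le_exp 1])
  have hs : |(-1 : ℝ)| ≤ 1 := by norm_num
  have := mul_le_mul exp_neg_one_le (hDA _ hs) (abs_nonneg _) (by norm_num)
  norm_num at decay this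
  linarith [growth _ hs, norm_nonneg (A 0)]

namespace StripPerturbation

variable {F : ℝ × E → ℝ × E} {ρ m : ℝ} {w : E → ℝ}

theorem exists_norm_secondDifference_graph_le (h : StripPerturbation F ρ)
    (hw : AdmissibleGraph ρ w) (hm : 0 < m) (hwm : SecondDifferenceLE w m) :
    ∃ δ > 0, ∀ x₁ x₂ x₃ x₄ : E, ‖x₁ - x₃‖ < δ → ‖x₂ - x₄‖ < δ →
      ‖F (w x₁, x₁) - F (w x₂, x₂) - F (w x₃, x₃) + F (w x₄, x₄)‖
        ≤ 1 / 16 * ‖x₁ - x₂ - x₃ + x₄‖ + m / 8 * ‖x₁ - x₂‖ := by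
  obtain ⟨δ₁, hδ₁, graph_bound⟩ := hwm
  obtain ⟨δ₂, hδ₂, field_bound⟩ := exists_four_point_bound (h.contDiff.differentiable one_ne_zero)
    (convex_strip ρ) h.norm_fderiv_le h.uniformContinuousOn_fderiv (show 0 < m / 16 by positivity)
  have graph_lip (x y : E) : ‖(w x, x) - (w y, y)‖ ≤ ‖x - y‖ := by
    simpa using hw.lipschitzWith_graph.norm_sub_le x y
  refine ⟨min δ₁ δ₂, lt_min hδ₁ hδ₂, fun x₁ x₂ x₃ x₄ h₁₃ h₂₄ => ?_⟩
  have hgraph : ‖(w x₁, x₁) - (w x₂, x₂) - (w x₃, x₃) + (w x₄, x₄)‖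
      ≤ ‖x₁ - x₂ - x₃ + x₄‖ + m * ‖x₁ - x₂‖ :=
    max_le (graph_bound _ _ _ _ (h₁₃.le.trans (min_le_left _ _)) (h₂₄.le.trans (min_le_left _ _)))
      (le_add_of_nonneg_right (by positivity))
  have hfield := field_bound _ (hw.mem_strip x₁) _ (hw.mem_strip x₂) _ (hw.mem_strip x₃) _
    (hw.mem_strip x₄) ((graph_lip _ _).trans_lt (h₁₃.trans_le (min_le_right _ _)))
    ((graph_lip _ _).trans_lt (h₂₄.trans_le (min_le_right _ _)))
  linarith [mul_le_mul_of_nonneg_left (graph_lip x₁ x₂) (show 0 ≤ m / 16 by positivity)]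

theorem norm_baseTrajectory_sub_le_of_abs_le_one (h : StripPerturbation F ρ)
    (hw : AdmissibleGraph ρ w) {X Y : ℝ → E} (hX : IsBaseTrajectory F w X)
    (hY : IsBaseTrajectory F w Y) {s : ℝ} (hs : |s| ≤ 1) :
    ‖X s - Y s‖ ≤ 16 / 15 * ‖X 0 - Y 0‖ := by
  refine (norm_le_div_of_norm_deriv_le (k := 1 / 16) (ν := 0) (by norm_num) (by norm_num) le_rfl
    (fun s => (hX s).sub (hY s)) (fun s _ => ?_) hs).trans_eq (by simp only [Pi.sub_apply]; ring)
  simpa using (h.lipschitzWith_base hw).norm_sub_le (X s) (Y s)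

/-- One unit of time contracts the second difference of the graph by `exp (-1)`, which beats its
growth along the base trajectories. -/
theorem secondDifferenceLE_step [CompleteSpace E] (h : StripPerturbation F ρ)
    (hw : AdmissibleGraph ρ w) (hinv : IsInvariantGraph F w) (hm : 0 < m)
    (hwm : SecondDifferenceLE w m) : SecondDifferenceLE w (3 / 4 * m) := by
  obtain ⟨δ₁, hδ₁, graph_bound⟩ := id hwm
  obtain ⟨δ₂, hδ₂, field_bound⟩ := h.exists_norm_secondDifference_graph_le hw hm hwm
  have hδ : 0 < min δ₁ δ₂ := lt_min hδ₁ hδ₂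
  refine ⟨min δ₁ δ₂ / 2, half_pos hδ, fun x₁ x₂ x₃ x₄ h₁₃ h₂₄ => ?_⟩
  obtain ⟨X₁, rfl, hX₁⟩ := h.exists_baseTrajectory hw x₁
  obtain ⟨X₂, rfl, hX₂⟩ := h.exists_baseTrajectory hw x₂
  obtain ⟨X₃, rfl, hX₃⟩ := h.exists_baseTrajectory hw x₃
  obtain ⟨X₄, rfl, hX₄⟩ := h.exists_baseTrajectory hw x₄
  have near {X Y : ℝ → E} (hX : IsBaseTrajectory F w X) (hY : IsBaseTrajectory F w Y)
      (h0 : ‖X 0 - Y 0‖ ≤ min δ₁ δ₂ / 2) {s : ℝ} (hs : |s| ≤ 1) : ‖X s - Y s‖ < min δ₁ δ₂ :=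
    (h.norm_baseTrajectory_sub_le_of_abs_le_one hw hX hY hs).trans_lt (by linarith)
  have hB {s : ℝ} (hs : |s| ≤ 1) : m * ‖X₁ s - X₂ s‖ ≤ 16 / 15 * (m * ‖X₁ 0 - X₂ 0‖) := by
    have := mul_le_mul_of_nonneg_left
      (h.norm_baseTrajectory_sub_le_of_abs_le_one hw hX₁ hX₂ hs) hm.le
    linarith
  rw [mul_assoc]
  refine norm_le_add_of_hasDerivAt_neg_add_secondDifference (by positivity)
    (D := fun s => w (X₁ s) - w (X₂ s) - w (X₃ s) + w (X₄ s))
    (A := fun s => X₁ s - X₂ s - X₃ s + X₄ s)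
    (n := fun s => F (w (X₁ s), X₁ s) - F (w (X₂ s), X₂ s) - F (w (X₃ s), X₃ s)
      + F (w (X₄ s), X₄ s))
    (fun s => ((((hinv _ hX₁ s).sub (hinv _ hX₂ s)).sub (hinv _ hX₃ s)).add
      (hinv _ hX₄ s)).congr_deriv (by simp only [Prod.fst_add, Prod.fst_sub]; ring))
    (fun s => (((hX₁ s).sub (hX₂ s)).sub (hX₃ s)).add (hX₄ s)) (fun s hs => ?_) fun s hs => ?_
  · linarith [hB hs, field_bound _ _ _ _ ((near hX₁ hX₃ h₁₃ hs).trans_le (min_le_right _ _))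
      ((near hX₂ hX₄ h₂₄ hs).trans_le (min_le_right _ _))]
  · linarith [hB hs, graph_bound _ _ _ _ ((near hX₁ hX₃ h₁₃ hs).le.trans (min_le_left _ _))
      ((near hX₂ hX₄ h₂₄ hs).le.trans (min_le_left _ _))]

theorem contDiff_of_isInvariantGraph [FiniteDimensional ℝ E] (h : StripPerturbation F ρ)
    (hw : AdmissibleGraph ρ w) (hinv : IsInvariantGraph F w) : ContDiff ℝ 1 w := by
  have : CompleteSpace E := FiniteDimensional.complete ℝ E
  have iterate (n : ℕ) : SecondDifferenceLE w ((3 / 4) ^ n * 2) := by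
    induction n with
    | zero => simpa using hw.secondDifferenceLE_two
    | succ n ih =>
      rw [pow_succ', mul_assoc]
      exact h.secondDifferenceLE_step hw hinv (by positivity) ih
  refine SecondDifferenceLE.contDiff hw.lipschitzWith fun m hm => ?_
  obtain ⟨n, hn⟩ := exists_pow_lt_of_lt_one (half_pos hm) (show (3 / 4 : ℝ) < 1 by norm_num)
  obtain ⟨δ, hδ, bound⟩ := iterate n
  refine ⟨δ, hδ, fun x₁ x₂ x₃ x₄ h₁₃ h₂₄ => (bound x₁ x₂ x₃ x₄ h₁₃ h₂₄).trans ?_⟩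
  gcongr
  linarith

end StripPerturbation

end Smoothness

section Barriers

theorem abs_le_of_hasDerivAt_neg_add {z n : ℝ → ℝ} {ρ t : ℝ} (hρ : 0 < ρ)
    (hz : ∀ t, HasDerivAt z (-z t + n t) t) (hn : ∀ t, |z t| = ρ → |n t| < ρ) (h0 : |z 0| ≤ ρ)
    (ht : 0 ≤ t) : |z t| ≤ ρ := by
  have hsq (s : ℝ) : HasDerivAt (fun s => z s ^ 2) (2 * z s * (-z s + n s)) s :=
    ((hz s).pow 2).congr_deriv (by norm_num)
  have inward (s : ℝ) (hs : z s ^ 2 = ρ ^ 2) : 2 * z s * (-z s + n s) < 0 := by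
    have habs : |z s| = ρ := by simpa [abs_of_pos hρ] using (sq_eq_sq_iff_abs_eq_abs _ _).1 hs
    have : z s * n s < ρ ^ 2 := by
      calc z s * n s ≤ |z s| * |n s| := (le_abs_self _).trans (abs_mul _ _).le
        _ < ρ ^ 2 := by rw [habs, sq]; exact mul_lt_mul_of_pos_left (hn s habs) hρ
    linarith
  refine abs_le_of_sq_le_sq ?_ hρ.le
  exact image_le_of_deriv_right_lt_deriv_boundary (f := fun s => z s ^ 2) (a := 0) (b := t)
    (B := fun _ => ρ ^ 2) (B' := 0) (fun s _ => (hsq s).continuousAt.continuousWithinAt)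
    (fun s _ => (hsq s).hasDerivWithinAt) (sq_le_sq' (abs_le.1 h0).1 (abs_le.1 h0).2)
    (fun s => hasDerivAt_const _ _) (fun s _ hs => inward s hs) ⟨ht, le_rfl⟩

theorem norm_le_mul_exp_of_eq_zero {E : Type*} [NormedAddCommGroup E] [NormedSpace ℝ E]
    {f f' : ℝ → E} {k r Z T t : ℝ} (hk : 0 ≤ k) (hkr : 2 * k < r) (hZ : 0 ≤ Z)
    (hf : ∀ s, HasDerivAt f (f' s) s) (hT : f T = 0)
    (bound : ∀ s ∈ Icc 0 T, ‖f' s‖ ≤ k * (‖f s‖ + Z * exp (-r * s))) (ht : t ∈ Icc 0 T) :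
    ‖f t‖ ≤ Z * exp (-r * t) := by
  rw [← div_le_iff₀ (exp_pos _)]
  refine le_of_forall_gt_imp_ge_of_dense fun c hc => ?_
  rw [div_le_iff₀ (exp_pos _)]
  have hB (s : ℝ) : HasDerivAt (fun s => c * exp (-r * (T - s))) (r * (c * exp (-r * (T - s)))) s :=
    ((((hasDerivAt_id s).const_sub T).const_mul (-r)).exp.const_mul c).congr_deriv (by simp; ring)
  have := image_norm_le_of_norm_deriv_right_lt_deriv_boundary (f := fun s => f (T - s)) (a := 0)
    (b := T) (f' := fun s => -f' (T - s))
    (fun s _ => ((hf _).comp_const_sub T s).continuousAt.continuousWithinAt)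
    (fun s _ => ((hf _).comp_const_sub T s).hasDerivWithinAt)
    (by simpa [hT] using mul_nonneg (hZ.trans hc.le) (exp_pos _).le) hB
    (fun s hs hs_eq => ?_) (x := T - t) ⟨sub_nonneg.2 ht.2, by linarith [ht.1]⟩
  · simpa using this
  · have hmem : T - s ∈ Icc 0 T := ⟨by linarith [hs.2], by linarith [hs.1]⟩
    set e := exp (-r * (T - s))
    calc ‖-f' (T - s)‖ ≤ k * (c * e + Z * e) := by
          rw [norm_neg, ← hs_eq]
          exact bound _ hmem
      _ ≤ k * (c * e + c * e) := by gcongr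
      _ = 2 * k * (c * e) := by ring
      _ < r * (c * e) := by
          have : 0 < c * e := mul_pos (hZ.trans_lt hc) (exp_pos _)
          gcongr

end Barriers

section InvariantManifold

variable {E : Type*} [NormedAddCommGroup E] [NormedSpace ℝ E] {F F' : ℝ × E → ℝ × E} {ρ ν : ℝ}
  {w w' : E → ℝ}

/-- The graph of `w` is a continuously differentiable invariant manifold of the system
`z' = -z + (F (z, x)).1`, `x' = (F (z, x)).2`, invariance being expressed by tangency of the vector
field. -/
structure InvariantManifold (F : ℝ × E → ℝ × E) (ρ : ℝ) (w : E → ℝ) : Prop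
    extends AdmissibleGraph ρ w where
  contDiff : ContDiff ℝ 1 w
  fderiv_base : ∀ x, fderiv ℝ w x (F (w x, x)).2 = -w x + (F (w x, x)).1

theorem StripPerturbation.exists_invariantManifold [FiniteDimensional ℝ E]
    (h : StripPerturbation F ρ) : ∃ w, InvariantManifold F ρ w := by
  have : CompleteSpace E := FiniteDimensional.complete ℝ E
  obtain ⟨w, hw, hinv⟩ := h.exists_isInvariantGraph
  have hw' := h.contDiff_of_isInvariantGraph hw hinv
  refine ⟨w, hw, hw', fun x => ?_⟩
  obtain ⟨X, rfl, hX⟩ := h.exists_baseTrajectory hw x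
  exact ((hw'.differentiable one_ne_zero (X 0)).hasFDerivAt.comp_hasDerivAt 0 (hX 0)).unique
    (hinv X hX 0)

/-- The projection of the vector `q` at the point `x` of the graph of `w` onto the `z`-axis, along
the tangent space of the graph. -/
noncomputable def verticalPart (w : E → ℝ) (x : E) (q : ℝ × E) : ℝ := q.1 - fderiv ℝ w x q.2

theorem AdmissibleGraph.abs_verticalPart_le (hw : AdmissibleGraph ρ w) (x : E) (q : ℝ × E) :
    |verticalPart w x q| ≤ 2 * ‖q‖ := by
  have hfderiv : |fderiv ℝ w x q.2| ≤ 1 * ‖q.2‖ :=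
    (fderiv ℝ w x).le_of_opNorm_le (norm_fderiv_le_of_lipschitz ℝ hw.lipschitzWith) q.2
  have := abs_sub q.1 (fderiv ℝ w x q.2)
  have := norm_fst_le q
  rw [norm_eq_abs] at this
  rw [verticalPart]
  linarith [norm_snd_le q]

namespace InvariantManifold

theorem hasDerivAt_sub (hw : InvariantManifold F ρ w) {z : ℝ → ℝ} {x : ℝ → E} {q : ℝ × E} {t : ℝ}
    (hz : HasDerivAt z (-z t + q.1) t) (hx : HasDerivAt x q.2 t) :
    HasDerivAt (fun s => z s - w (x s))
      (-(z t - w (x t)) + verticalPart w (x t) (q - F (w (x t), x t))) t := by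
  refine (hz.sub ((hw.contDiff.differentiable one_ne_zero (x t)).hasFDerivAt.comp_hasDerivAt t
    hx)).congr_deriv ?_
  rw [verticalPart, Prod.snd_sub, map_sub, hw.fderiv_base, Prod.fst_sub]
  ring

theorem hasDerivAt_comp (hw : InvariantManifold F ρ w) {X : ℝ → E} (hX : IsBaseTrajectory F w X)
    (t : ℝ) : HasDerivAt (fun s => w (X s)) (-w (X t) + (F (w (X t), X t)).1) t :=
  ((hw.contDiff.differentiable one_ne_zero (X t)).hasFDerivAt.comp_hasDerivAt t
    (hX t)).congr_deriv (hw.fderiv_base _)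

theorem abs_sub_le_of_norm_sub_le [CompleteSpace E] (hw : InvariantManifold F ρ w)
    (h : StripPerturbation F ρ) (hw' : InvariantManifold F' ρ w')
    (hν : ∀ p ∈ strip E ρ, ‖F p - F' p‖ ≤ ν) (x : E) : |w x - w' x| ≤ 3 * ν := by
  obtain ⟨X, rfl, hX⟩ := h.exists_baseTrajectory hw.toAdmissibleGraph x
  have hν0 : 0 ≤ ν := (norm_nonneg _).trans (hν _ (hw.mem_strip (X 0)))
  have vertical (t : ℝ) : |verticalPart w' (X t) (F (w (X t), X t) - F' (w' (X t), X t))|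
      ≤ 1 / 8 * |w (X t) - w' (X t)| + 2 * ν := by
    have hlip : ‖F (w (X t), X t) - F (w' (X t), X t)‖ ≤ 1 / 16 * |w (X t) - w' (X t)| := by
      simpa [Prod.norm_def] using h.norm_sub_le (hw.mem_strip (X t)) (hw'.mem_strip (X t))
    linarith [hw'.abs_verticalPart_le (X t) (F (w (X t), X t) - F' (w' (X t), X t)),
      norm_sub_le_norm_sub_add_norm_sub (F (w (X t), X t)) (F (w' (X t), X t))
        (F' (w' (X t), X t)), hν _ (hw'.mem_strip (X t))]
  have := norm_le_div_of_hasDerivAt_neg_add (C := ρ + ρ) (t := 0) (by norm_num) (by positivity)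
    (fun t _ => hw'.hasDerivAt_sub (hw.hasDerivAt_comp hX t) (hX t))
    (fun t _ => (abs_sub _ _).trans (add_le_add (hw.abs_le _) (hw'.abs_le _)))
    (fun t _ => vertical t)
  rw [norm_eq_abs] at this
  norm_num at this
  linarith

/-- Comparison with the field for which the plane `z = 0` is invariant. -/
theorem abs_le_of_abs_fst_zero_le [CompleteSpace E] (hw : InvariantManifold F ρ w)
    (h : StripPerturbation F ρ) (hν : ∀ x, |(F (0, x)).1| ≤ ν) (x : E) : |w x| ≤ 3 * ν := by
  have plane : InvariantManifold (fun p => ((F p).1 - (F (0, p.2)).1, (F p).2)) ρ 0 :=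
    ⟨⟨fun x => by simpa using h.radius_pos.le, LipschitzWith.const' 0⟩, contDiff_const,
      fun x => by simp⟩
  simpa using hw.abs_sub_le_of_norm_sub_le h plane (ν := ν)
    (fun p _ => by simpa [Prod.norm_def, (abs_nonneg _).trans (hν 0)] using hν p.2) x

theorem periodic [CompleteSpace E] (hw : InvariantManifold F ρ w) (h : StripPerturbation F ρ)
    {v : E} (hF : Function.Periodic F (0, v)) : Function.Periodic w v := by
  intro x
  have shift : InvariantManifold F ρ fun x => w (x + v) := by
    refine ⟨⟨fun x => hw.abs_le _, ?_⟩, hw.contDiff.comp (contDiff_id.add contDiff_const),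
      fun x => ?_⟩
    · exact LipschitzWith.mk_one fun x y => by
        simpa using hw.lipschitzWith.dist_le_mul (x + v) (y + v)
    · have : F (w (x + v), x) = F (w (x + v), x + v) := by
        simpa using (hF (w (x + v), x)).symm
      rw [fderiv_comp_add_right, this, hw.fderiv_base]
  have := shift.abs_sub_le_of_norm_sub_le h hw (ν := 0) (by simp) x
  simpa [sub_eq_zero] using this

end InvariantManifold

end InvariantManifold

section AsymptoticPhase

variable {E : Type*} [NormedAddCommGroup E] [NormedSpace ℝ E] {F : ℝ × E → ℝ × E} {ρ : ℝ}
  {w : E → ℝ} {z : ℝ → ℝ} {x : ℝ → E}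

/-- `(z, x)` solves the system `z' = -z + (F (z, x)).1`, `x' = (F (z, x)).2`. -/
structure IsTrajectory (F : ℝ × E → ℝ × E) (z : ℝ → ℝ) (x : ℝ → E) : Prop where
  hasDerivAt_fst : ∀ t, HasDerivAt z (-z t + (F (z t, x t)).1) t
  hasDerivAt_snd : ∀ t, HasDerivAt x (F (z t, x t)).2 t

namespace StripPerturbation

theorem abs_le_of_isTrajectory (h : StripPerturbation F ρ) (hzx : IsTrajectory F z x)
    (h0 : |z 0| ≤ ρ) {t : ℝ} (ht : 0 ≤ t) : |z t| ≤ ρ :=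
  abs_le_of_hasDerivAt_neg_add h.radius_pos hzx.hasDerivAt_fst
    (fun _ hs => (h.abs_fst_le (p := (_, _)) hs.le).trans_lt (by linarith [h.radius_pos])) h0 ht

theorem abs_sub_graph_le (h : StripPerturbation F ρ) (hw : InvariantManifold F ρ w)
    (hzx : IsTrajectory F z x) (h0 : |z 0| ≤ ρ) {t : ℝ} (ht : 0 ≤ t) :
    |z t - w (x t)| ≤ |z 0 - w (x 0)| * exp (-(7 / 8) * t) := by
  have := norm_le_exp_mul_add_of_hasDerivAt_neg_add (k := 1 / 8) (ν := 0) (by norm_num) le_rfl ht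
    (fun s _ => hw.hasDerivAt_sub (hzx.hasDerivAt_fst s) (hzx.hasDerivAt_snd s)) fun s hs => by
      have hlip : ‖F (z s, x s) - F (w (x s), x s)‖ ≤ 1 / 16 * |z s - w (x s)| := by
        simpa [Prod.norm_def] using
          h.norm_sub_le (p := (z s, x s)) (h.abs_le_of_isTrajectory hzx h0 hs.1)
            (hw.mem_strip (x s))
      rw [norm_eq_abs, norm_eq_abs]
      linarith [hw.abs_verticalPart_le (x s) (F (z s, x s) - F (w (x s), x s))]
  rw [norm_eq_abs, norm_eq_abs, zero_div, add_zero, sub_zero, mul_comm] at this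
  norm_num at this ⊢
  exact this

theorem norm_sub_baseTrajectory_le (h : StripPerturbation F ρ) (hw : InvariantManifold F ρ w)
    (hzx : IsTrajectory F z x) (h0 : |z 0| ≤ ρ) {Y : ℝ → E} (hY : IsBaseTrajectory F w Y) {T t : ℝ}
    (hT : x T = Y T) (ht : t ∈ Icc 0 T) :
    ‖x t - Y t‖ ≤ |z 0 - w (x 0)| * exp (-(7 / 8) * t) := by
  refine norm_le_mul_exp_of_eq_zero (f := fun s => x s - Y s) (k := 1 / 16) (by norm_num)
    (by norm_num) (abs_nonneg _) (fun s => (hzx.hasDerivAt_snd s).sub (hY s)) (sub_eq_zero.2 hT)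
    (fun s hs => ?_) ht
  have graph_dist : ‖(z s, x s) - (w (Y s), Y s)‖ ≤ ‖x s - Y s‖ + |z s - w (x s)| := by
    refine max_le ?_ (le_add_of_nonneg_right (abs_nonneg _))
    change |z s - w (Y s)| ≤ _
    linarith [abs_sub_le (z s) (w (x s)) (w (Y s)), hw.abs_sub_le (x s) (Y s)]
  calc ‖(F (z s, x s)).2 - (F (w (Y s), Y s)).2‖ ≤ ‖F (z s, x s) - F (w (Y s), Y s)‖ :=
        norm_snd_le (F (z s, x s) - F (w (Y s), Y s))
    _ ≤ 1 / 16 * ‖(z s, x s) - (w (Y s), Y s)‖ :=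
        h.norm_sub_le (h.abs_le_of_isTrajectory hzx h0 hs.1) (hw.mem_strip _)
    _ ≤ 1 / 16 * (‖x s - Y s‖ + |z 0 - w (x 0)| * exp (-(7 / 8) * s)) := by
        gcongr
        exact graph_dist.trans (add_le_add_right (h.abs_sub_graph_le hw hzx h0 hs.1) _)

/-- The asymptotic phase is a limit point of the trajectories on the graph which meet `x` at time
`n`, as `n → ∞`. -/
theorem exists_baseTrajectory_norm_sub_le [FiniteDimensional ℝ E] (h : StripPerturbation F ρ)
    (hw : InvariantManifold F ρ w) (hzx : IsTrajectory F z x) (h0 : |z 0| ≤ ρ) :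
    ∃ Y, IsBaseTrajectory F w Y ∧
      ∀ t ≥ 0, ‖x t - Y t‖ ≤ |z 0 - w (x 0)| * exp (-(7 / 8) * t) := by
  have : ProperSpace E := FiniteDimensional.proper ℝ E
  have matched (n : ℕ) : ∃ Y, IsBaseTrajectory F w Y ∧ x n = Y n := by
    obtain ⟨Y, hY0, hY⟩ := h.exists_baseTrajectory hw.toAdmissibleGraph (x n)
    exact ⟨fun t => Y (t - n), fun t => (hY (t - n)).comp_sub_const t n, by simp [hY0]⟩
  choose Y hY hmatch using matched
  have hclose (n : ℕ) {t : ℝ} (ht : t ∈ Icc (0 : ℝ) n) :=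
    h.norm_sub_baseTrajectory_le hw hzx h0 (hY n) (hmatch n) ht
  have bounded (n : ℕ) : Y n 0 ∈ Metric.closedBall (x 0) |z 0 - w (x 0)| := by
    rw [mem_closedBall_iff_norm']
    simpa using hclose n ⟨le_rfl, n.cast_nonneg⟩
  obtain ⟨y, -, φ, hφ, hlim⟩ := (isCompact_closedBall _ _).tendsto_subseq bounded
  obtain ⟨X, rfl, hX⟩ := h.exists_baseTrajectory hw.toAdmissibleGraph y
  have pointwise_lim (t : ℝ) : Tendsto (fun k => Y (φ k) t) atTop (𝓝 (X t)) := by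
    rw [tendsto_iff_norm_sub_tendsto_zero] at hlim ⊢
    exact squeeze_zero (fun k => norm_nonneg _)
      (fun k => h.norm_baseTrajectory_sub_le hw.toAdmissibleGraph (hY (φ k)) hX t)
      (by simpa using hlim.const_mul (exp (1 / 16 * |t|)))
  refine ⟨X, hX, fun t ht => le_of_tendsto ((pointwise_lim t).const_sub (x t)).norm ?_⟩
  filter_upwards [hφ.tendsto_atTop.eventually_ge_atTop ⌈t⌉₊] with k hk
  exact hclose (φ k) ⟨ht, Nat.ceil_le.1 hk⟩

theorem exists_asymptoticPhase [FiniteDimensional ℝ E] (h : StripPerturbation F ρ)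
    (hw : InvariantManifold F ρ w) (hzx : IsTrajectory F z x) (h0 : |z 0| ≤ ρ) :
    ∃ Y, IsBaseTrajectory F w Y ∧ ∀ t ≥ 0,
      |z t - w (Y t)| ≤ 2 * (|z 0 - w (x 0)| * exp (-(7 / 8) * t)) ∧
      ‖x t - Y t‖ ≤ |z 0 - w (x 0)| * exp (-(7 / 8) * t) := by
  obtain ⟨Y, hY, hclose⟩ := h.exists_baseTrajectory_norm_sub_le hw hzx h0
  refine ⟨Y, hY, fun t ht => ⟨?_, hclose t ht⟩⟩
  linarith [abs_sub_le (z t) (w (x t)) (w (Y t)), hw.abs_sub_le (x t) (Y t), hclose t ht,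
    h.abs_sub_graph_le hw hzx h0 ht]

end StripPerturbation

end AsymptoticPhase

section Periods

theorem uniformContinuousOn_of_periods {X Y : Type*} [NormedAddCommGroup X] [ProperSpace X]
    [PseudoMetricSpace Y] {f : X → Y} (hf : Continuous f) {s : Set X} {R : ℝ}
    (hR : ∀ p ∈ s, ∃ k, Function.Periodic f k ∧ ‖p + k‖ ≤ R) : UniformContinuousOn f s := by
  have hball := (isCompact_closedBall (0 : X) (R + 1)).uniformContinuousOn_of_continuous
    hf.continuousOn
  rw [Metric.uniformContinuousOn_iff] at hball ⊢
  intro η hη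
  obtain ⟨δ, hδ, hball⟩ := hball η hη
  refine ⟨min δ 1, lt_min hδ one_pos, fun p hp q _ hpq => ?_⟩
  obtain ⟨k, hk, hkR⟩ := hR p hp
  have hq : ‖q + k‖ ≤ R + 1 := by
    have := (norm_le_norm_add_norm_sub' (q + k) (p + k)).trans
      (add_le_add hkR (norm_sub_rev (q + k) (p + k)).le)
    rw [add_sub_add_right_eq_sub, ← dist_eq_norm] at this
    linarith [hpq.trans_le (min_le_right _ _)]
  rw [← hk p, ← hk q]
  exact hball _ (mem_closedBall_zero_iff.2 (by linarith)) _ (mem_closedBall_zero_iff.2 hq)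
    (by simpa using hpq.trans_le (min_le_left _ _))

theorem fderiv_periodic {X Y : Type*} [NormedAddCommGroup X] [NormedSpace ℝ X]
    [NormedAddCommGroup Y] [NormedSpace ℝ Y] {f : X → Y} {k : X} (hf : Function.Periodic f k) :
    Function.Periodic (fderiv ℝ f) k := fun p => by
  rw [← fderiv_comp_add_right, show (fun x => f (x + k)) = f from funext hf]

theorem exists_abs_add_zsmul_le {c : ℝ} (hc : 0 < c) (a : ℝ) : ∃ n : ℤ, |a + n • c| ≤ c := by
  obtain ⟨n, hn, -⟩ := existsUnique_add_zsmul_mem_Ico hc a 0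
  exact ⟨n, abs_le.2 ⟨by linarith [hn.1], by linarith [hn.2]⟩⟩

/-- Generators of the period lattice of the three angles `(φ₂, βt, αt)`. -/
def anglePeriods : Set (ℝ × ℝ × ℝ) := {(2 * π, 0, 0), (0, 2 * π, 0), (0, 0, 2 * π)}

theorem uniformContinuousOn_strip {Y : Type*} [PseudoMetricSpace Y] {f : ℝ × ℝ × ℝ × ℝ → Y}
    (hf : Continuous f) (hper : ∀ k ∈ anglePeriods, Function.Periodic f (0, k)) (ρ : ℝ) :
    UniformContinuousOn f (strip (ℝ × ℝ × ℝ) ρ) := by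
  refine uniformContinuousOn_of_periods hf (R := max ρ (2 * π)) fun ⟨z, φ, b, a⟩ hp => ?_
  obtain ⟨l, hl⟩ := exists_abs_add_zsmul_le two_pi_pos φ
  obtain ⟨m, hm⟩ := exists_abs_add_zsmul_le two_pi_pos b
  obtain ⟨n, hn⟩ := exists_abs_add_zsmul_le two_pi_pos a
  refine ⟨_, (((hper (2 * π, 0, 0) (by simp [anglePeriods])).zsmul l).add_period
    ((hper (0, 2 * π, 0) (by simp [anglePeriods])).zsmul m)).add_period
    ((hper (0, 0, 2 * π) (by simp [anglePeriods])).zsmul n), ?_⟩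
  simpa using max_le_max (show |z| ≤ ρ from hp) (max_le hl (max_le hm hn))

end Periods

section Forcing

theorem BddWithDeriv.comp {X Y : Type*} [NormedAddCommGroup X] [NormedSpace ℝ X]
    [NormedAddCommGroup Y] [NormedSpace ℝ Y] {S : Y → ℝ} {A : X → Y} {M : ℝ}
    (hS : BddWithDeriv S M) (hSd : Differentiable ℝ S) (hA : LipschitzWith 1 A)
    (hAd : Differentiable ℝ A) : BddWithDeriv (fun p => S (A p)) M := fun p => by
  refine ⟨(hS (A p)).1, ?_⟩
  rw [show fderiv ℝ (fun p => S (A p)) p = (fderiv ℝ S (A p)).comp (fderiv ℝ A p) from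
    fderiv_comp p (hSd (A p)) (hAd p)]
  calc ‖(fderiv ℝ S (A p)).comp (fderiv ℝ A p)‖ ≤ ‖fderiv ℝ S (A p)‖ * ‖fderiv ℝ A p‖ :=
        ContinuousLinearMap.opNorm_comp_le _ _
    _ ≤ ‖fderiv ℝ S (A p)‖ * 1 := by
        gcongr
        simpa using norm_fderiv_le_of_lipschitz ℝ hA
    _ ≤ M := by simpa using (hS (A p)).2

/-- A forcing term of size `q` in the system for `(z, x)`, where `x = (φ₂, βt, αt)` are the angles
and `z` is the rescaled deviation of `ψ₂` from its equilibrium. -/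
structure Forcing (f : ℝ × ℝ × ℝ × ℝ → ℝ) (q : ℝ) : Prop where
  contDiff : ContDiff ℝ 1 f
  periodic : ∀ k ∈ anglePeriods, Function.Periodic f (0, k)
  bddWithDeriv : BddWithDeriv f q

namespace Forcing

variable {f g : ℝ × ℝ × ℝ × ℝ → ℝ} {q q' : ℝ}

theorem const_mul (hf : Forcing f q) (c : ℝ) : Forcing (fun p => c * f p) (|c| * q) where
  contDiff := contDiff_const.mul hf.contDiff
  periodic k hk p := by simp only [hf.periodic k hk p]
  bddWithDeriv p := by
    rw [abs_mul, fderiv_const_mul (hf.contDiff.differentiable one_ne_zero p), norm_smul,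
      norm_eq_abs]
    have := hf.bddWithDeriv p
    constructor <;> gcongr <;> tauto

theorem add (hf : Forcing f q) (hg : Forcing g q') : Forcing (fun p => f p + g p) (q + q') where
  contDiff := hf.contDiff.add hg.contDiff
  periodic k hk p := by simp only [hf.periodic k hk p, hg.periodic k hk p]
  bddWithDeriv p := by
    rw [fderiv_fun_add (hf.contDiff.differentiable one_ne_zero p)
      (hg.contDiff.differentiable one_ne_zero p)]
    exact ⟨(abs_add_le _ _).trans (add_le_add (hf.bddWithDeriv p).1 (hg.bddWithDeriv p).1),
      norm_add_le_of_le (hf.bddWithDeriv p).2 (hg.bddWithDeriv p).2⟩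

theorem mono (hf : Forcing f q) (hq : q ≤ q') : Forcing f q' :=
  ⟨hf.contDiff, hf.periodic, fun p =>
    ⟨(hf.bddWithDeriv p).1.trans hq, (hf.bddWithDeriv p).2.trans hq⟩⟩

end Forcing

/-- The class of the terms `S̃₁₁`, `S̃₂₁`, with arguments `(ψ₂, βt, μ)`. -/
structure SlowTerm (S : ℝ × ℝ × ℝ → ℝ) (M : ℝ) : Prop where
  contDiff : ContDiff ℝ 1 S
  periodic : Function.Periodic S (0, 2 * π, 0)
  bddWithDeriv : BddWithDeriv S M

/-- The class of the terms `S̃₁₂`, `S̃₁₃`, `S̃₂₂`, `S̃₂₃`, with arguments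
`(ψ₂, φ₂, βt, αt, μ, ε)`. -/
structure FastTerm (S : ℝ × ℝ × ℝ × ℝ × ℝ × ℝ → ℝ) (M : ℝ) : Prop where
  contDiff : ContDiff ℝ 1 S
  periodic : ∀ k ∈ anglePeriods, Function.Periodic S (0, k.1, k.2.1, k.2.2, 0, 0)
  bddWithDeriv : BddWithDeriv S M

theorem dist_add_mul_le {κ : ℝ} (hκ : |κ| ≤ 1) (ϑ y z : ℝ) :
    dist (ϑ + κ * y) (ϑ + κ * z) ≤ dist y z := by
  rw [dist_add_left, dist_eq, dist_eq, ← mul_sub, abs_mul]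
  exact mul_le_of_le_one_left (abs_nonneg _) hκ

theorem SlowTerm.forcing {S : ℝ × ℝ × ℝ → ℝ} {M κ : ℝ} (hS : SlowTerm S M) (hκ : |κ| ≤ 1)
    (ϑ μ : ℝ) : Forcing (fun p => S (ϑ + κ * p.1, p.2.2.1, μ)) M where
  contDiff := hS.contDiff.comp (by fun_prop)
  periodic := by
    have hper (z b : ℝ) : S (z, b + 2 * π, μ) = S (z, b, μ) := by
      simpa using hS.periodic (z, b, μ)
    rintro k (rfl | rfl | rfl) p <;> simp [hper]
  bddWithDeriv := by
    refine hS.bddWithDeriv.comp (hS.contDiff.differentiable one_ne_zero)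
      (A := fun p : ℝ × ℝ × ℝ × ℝ => (ϑ + κ * p.1, p.2.2.1, μ))
      (LipschitzWith.mk_one fun p q => ?_) (by fun_prop)
    have := dist_add_mul_le hκ ϑ p.1 q.1
    simp only [Prod.dist_eq, dist_self]
    grind [dist_nonneg]

theorem FastTerm.forcing {S : ℝ × ℝ × ℝ × ℝ × ℝ × ℝ → ℝ} {M κ : ℝ} (hS : FastTerm S M)
    (hκ : |κ| ≤ 1) (ϑ μ ε : ℝ) :
    Forcing (fun p => S (ϑ + κ * p.1, p.2.1, p.2.2.1, p.2.2.2, μ, ε)) M where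
  contDiff := hS.contDiff.comp (by fun_prop)
  periodic k hk p := by
    simpa using hS.periodic k hk (ϑ + κ * p.1, p.2.1, p.2.2.1, p.2.2.2, μ, ε)
  bddWithDeriv := by
    refine hS.bddWithDeriv.comp (hS.contDiff.differentiable one_ne_zero)
      (A := fun p : ℝ × ℝ × ℝ × ℝ => (ϑ + κ * p.1, p.2.1, p.2.2.1, p.2.2.2, μ, ε))
      (LipschitzWith.mk_one fun p q => ?_) (by fun_prop)
    have := dist_add_mul_le hκ ϑ p.1 q.1
    simp only [Prod.dist_eq, dist_self]
    grind [dist_nonneg]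

end Forcing

section ForcedField

/-- The field `F` of a system `z' = -z + (F (z, x)).1`, `x' = (F (z, x)).2` in which the angles
`x = (φ₂, βt, αt)` enter only through the forcing terms, and the last two rotate uniformly. -/
def forcedField (h₁ h₂ : ℝ → ℝ) (f₁ f₂ : ℝ × ℝ × ℝ × ℝ → ℝ) (b : ℝ × ℝ) (p : ℝ × ℝ × ℝ × ℝ) :
    ℝ × ℝ × ℝ × ℝ :=
  (h₁ p.1 + f₁ p, h₂ p.1 + f₂ p, b)

variable {h₁ h₂ h : ℝ → ℝ} {f₁ f₂ f g₁ g₂ : ℝ × ℝ × ℝ × ℝ → ℝ} {b : ℝ × ℝ} {ρ q : ℝ}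

theorem periodic_forcedField {v : ℝ × ℝ × ℝ} (hf₁ : Function.Periodic f₁ (0, v))
    (hf₂ : Function.Periodic f₂ (0, v)) : Function.Periodic (forcedField h₁ h₂ f₁ f₂ b) (0, v) :=
  fun p => by simp [forcedField, hf₁ p, hf₂ p]

theorem Forcing.norm_fderiv_comp_fst_add_le (hf : Forcing f q) (hh : ContDiff ℝ 1 h)
    {p : ℝ × ℝ × ℝ × ℝ} {c : ℝ} (hc : |deriv h p.1| ≤ c) :
    ‖fderiv ℝ (fun p => h p.1 + f p) p‖ ≤ c + q := by
  have hfst : HasFDerivAt (fun p : ℝ × ℝ × ℝ × ℝ => h p.1)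
      (deriv h p.1 • ContinuousLinearMap.fst ℝ ℝ (ℝ × ℝ × ℝ)) p :=
    (hh.differentiable one_ne_zero p.1).hasDerivAt.comp_hasFDerivAt p hasFDerivAt_fst
  rw [(hfst.fun_add (hf.contDiff.differentiable one_ne_zero p).hasFDerivAt).fderiv]
  refine norm_add_le_of_le ?_ (hf.bddWithDeriv p).2
  rw [norm_smul]
  exact (mul_le_of_le_one_right (norm_nonneg _) (ContinuousLinearMap.norm_fst_le _ _ _)).trans hc

theorem stripPerturbation_forcedField (hρ : 0 < ρ) (hh₁ : ContDiff ℝ 1 h₁) (hh₂ : ContDiff ℝ 1 h₂)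
    (hf₁ : Forcing f₁ q) (hf₂ : Forcing f₂ q) (h0 : h₁ 0 = 0)
    (hh₁' : ∀ z, |z| ≤ ρ → |deriv h₁ z| ≤ 1 / 32) (hh₂' : ∀ z, |z| ≤ ρ → |deriv h₂ z| ≤ 1 / 32)
    (hq : q ≤ 1 / 32) (hqρ : q ≤ ρ / 2) : StripPerturbation (forcedField h₁ h₂ f₁ f₂ b) ρ := by
  have hF₁ : ContDiff ℝ 1 fun p => h₁ p.1 + f₁ p := (hh₁.comp contDiff_fst).add hf₁.contDiff
  have hF₂ : ContDiff ℝ 1 fun p => h₂ p.1 + f₂ p := (hh₂.comp contDiff_fst).add hf₂.contDiff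
  have hF : ContDiff ℝ 1 (forcedField h₁ h₂ f₁ f₂ b) := hF₁.prodMk (hF₂.prodMk contDiff_const)
  refine ⟨hρ, hF, fun p hp => ?_, ?_, fun x => ?_⟩
  · have hfderiv : HasFDerivAt (forcedField h₁ h₂ f₁ f₂ b) _ p :=
      (hF₁.differentiable one_ne_zero p).hasFDerivAt.prodMk
        ((hF₂.differentiable one_ne_zero p).hasFDerivAt.prodMk (hasFDerivAt_const b p))
    rw [hfderiv.fderiv]
    have := hf₁.norm_fderiv_comp_fst_add_le hh₁ (hh₁' _ hp)
    have := hf₂.norm_fderiv_comp_fst_add_le hh₂ (hh₂' _ hp)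
    simp only [ContinuousLinearMap.opNorm_prod, Prod.norm_mk, norm_zero]
    exact max_le (by linarith) (max_le (by linarith) (by norm_num))
  · exact uniformContinuousOn_strip (hF.continuous_fderiv one_ne_zero)
      (fun k hk => fderiv_periodic (periodic_forcedField (hf₁.periodic k hk) (hf₂.periodic k hk))) ρ
  · simpa [forcedField, h0] using (hf₁.bddWithDeriv (0, x)).1.trans hqρ

theorem norm_forcedField_add_sub_le {p : ℝ × ℝ × ℝ × ℝ} (hg₁ : |g₁ p| ≤ q) (hg₂ : |g₂ p| ≤ q) :
    ‖forcedField h₁ h₂ (fun p => f₁ p + g₁ p) (fun p => f₂ p + g₂ p) b p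
      - forcedField h₁ h₂ f₁ f₂ b p‖ ≤ q := by
  have : 0 ≤ q := (abs_nonneg _).trans hg₁
  simp [forcedField, Prod.norm_def, *]

end ForcedField

section PlanarSystem

/-- `ψ = Γ φ t` is an integral manifold of the system `ψ' = Rψ ψ φ t`, `φ' = Rφ ψ φ t`: every motion
on it solves the system. -/
def IsIntegralManifold (Rψ Rφ : ℝ → ℝ → ℝ → ℝ) (Γ : ℝ → ℝ → ℝ) : Prop :=
  ∀ φf : ℝ → ℝ, (∀ t : ℝ, HasDerivAt φf (Rφ (Γ (φf t) t) (φf t) t) t) →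
    ∀ t : ℝ, HasDerivAt (fun s => Γ (φf s) s) (Rψ (Γ (φf t) t) (φf t) t) t

/-- Every solution of `ψ' = Rψ ψ φ t`, `φ' = Rφ ψ φ t` with `|ψ t₀ - ϑ| ≤ δ` is approached by a
motion on `ψ = Γ φ t` at the rate `L * exp (r * (t - t₀))`, on the times `t` with `J t₀ t`. The
relation `J` is `≤` for attraction in the future and `≥` for attraction in the past. -/
def ExpApproaches (Rψ Rφ : ℝ → ℝ → ℝ → ℝ) (Γ : ℝ → ℝ → ℝ) (ϑ δ L r : ℝ) (J : ℝ → ℝ → Prop) :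
    Prop :=
  ∀ (ψf φf : ℝ → ℝ) (t₀ : ℝ), (∀ t : ℝ, HasDerivAt ψf (Rψ (ψf t) (φf t) t) t) →
    (∀ t : ℝ, HasDerivAt φf (Rφ (ψf t) (φf t) t) t) → |ψf t₀ - ϑ| ≤ δ →
    ∃ φb : ℝ → ℝ, (∀ t : ℝ, HasDerivAt φb (Rφ (Γ (φb t) t) (φb t) t) t) ∧
      ∀ t : ℝ, J t₀ t → |ψf t - Γ (φb t) t| + |φf t - φb t| ≤
        L * exp (r * (t - t₀)) * (|ψf t₀ - Γ (φb t₀) t₀| + |φf t₀ - φb t₀|)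

theorem ExpApproaches.mono {Rψ Rφ : ℝ → ℝ → ℝ → ℝ} {Γ : ℝ → ℝ → ℝ} {ϑ δ L r : ℝ}
    {J J' : ℝ → ℝ → Prop} (h : ExpApproaches Rψ Rφ Γ ϑ δ L r J) (hJ : ∀ s t, J' s t → J s t) :
    ExpApproaches Rψ Rφ Γ ϑ δ L r J' := fun ψf φf t₀ hψ hφ h0 => by
  obtain ⟨φb, hφb, hclose⟩ := h ψf φf t₀ hψ hφ h0
  exact ⟨φb, hφb, fun t ht => hclose t (hJ t₀ t ht)⟩

/-- The substitution `ψ = ϑ + κ * z`, `τ = σ * t`, with `βt` and `αt` as new variables, turns the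
system `ψ' = Rψ ψ φ t`, `φ' = Rφ ψ φ t` into `z' = -z + (H (z, x)).1`, `x' = (H (z, x)).2`. -/
structure RescalesTo (Rψ Rφ : ℝ → ℝ → ℝ → ℝ) (ϑ κ σ α β : ℝ)
    (H : ℝ × ℝ × ℝ × ℝ → ℝ × ℝ × ℝ × ℝ) : Prop where
  slow : ∀ z φ t, Rψ (ϑ + κ * z) φ t = κ * (σ * (-z + (H (z, φ, β * t, α * t)).1))
  fast : ∀ z φ t, Rφ (ϑ + κ * z) φ t = σ * (H (z, φ, β * t, α * t)).2.1
  rotation : ∀ p, σ • (H p).2.2 = (β, α)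

theorem eq_of_hasDerivAt_eq_of_tendsto {E : Type*} [NormedAddCommGroup E] [NormedSpace ℝ E]
    {u v f : ℝ → E} (hu : ∀ t, HasDerivAt u (f t) t) (hv : ∀ t, HasDerivAt v (f t) t)
    (h : Tendsto (fun t => u t - v t) atTop (𝓝 0)) : u = v := by
  have hd (t : ℝ) : HasDerivAt (fun t => u t - v t) 0 t := by
    simpa using (hu t).fun_sub (hv t)
  have hconst := is_const_of_deriv_eq_zero (fun t => (hd t).differentiableAt) fun t => (hd t).deriv
  funext t
  refine sub_eq_zero.1 (tendsto_nhds_unique (tendsto_const_nhds.congr fun s => ?_) h)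
  exact hconst t s

namespace RescalesTo

variable {Rψ Rφ : ℝ → ℝ → ℝ → ℝ} {ϑ κ σ α β ρ : ℝ} {H : ℝ × ℝ × ℝ × ℝ → ℝ × ℝ × ℝ × ℝ}
  {w : ℝ × ℝ × ℝ → ℝ} {ψf φf : ℝ → ℝ}

theorem hasDerivAt_angles (h : RescalesTo Rψ Rφ ϑ κ σ α β H) {z t : ℝ}
    (hφ : HasDerivAt φf (Rφ (ϑ + κ * z) (φf t) t) t) :
    HasDerivAt (fun s => (φf s, β * s, α * s)) (σ • (H (z, φf t, β * t, α * t)).2) t := by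
  refine (hφ.prodMk ((hasDerivAt_const_mul β).prodMk (hasDerivAt_const_mul α))).congr_deriv ?_
  rw [h.fast, ← h.rotation (z, φf t, β * t, α * t)]
  rfl

theorem isIntegralManifold (h : RescalesTo Rψ Rφ ϑ κ σ α β H) (hw : InvariantManifold H ρ w) :
    IsIntegralManifold Rψ Rφ fun φ t => ϑ + κ * w (φ, β * t, α * t) := fun φf hφ t => by
  refine ((((hw.contDiff.differentiable one_ne_zero _).hasFDerivAt.comp_hasDerivAt t
    (h.hasDerivAt_angles (hφ t))).const_mul κ).const_add ϑ).congr_deriv ?_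
  rw [map_smul, hw.fderiv_base, h.slow, smul_eq_mul]

theorem isTrajectory (h : RescalesTo Rψ Rφ ϑ κ σ α β H) (hκ : κ ≠ 0) (hσ : σ ≠ 0)
    (hψ : ∀ t, HasDerivAt ψf (Rψ (ψf t) (φf t) t) t)
    (hφ : ∀ t, HasDerivAt φf (Rφ (ψf t) (φf t) t) t) (t₀ : ℝ) :
    IsTrajectory H (fun τ => (ψf (t₀ + τ / σ) - ϑ) / κ)
      fun τ => (φf (t₀ + τ / σ), β * (t₀ + τ / σ), α * (t₀ + τ / σ)) := by
  have time (τ : ℝ) : HasDerivAt (fun τ => t₀ + τ / σ) σ⁻¹ τ := by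
    simpa using ((hasDerivAt_id τ).div_const σ).const_add t₀
  have unscale (t : ℝ) : ψf t = ϑ + κ * ((ψf t - ϑ) / κ) := by field_simp; ring
  constructor <;> intro τ
  · refine ((((hψ _).comp τ (time τ)).sub_const ϑ).div_const κ).congr_deriv ?_
    conv_lhs => rw [unscale, h.slow]
    field_simp
  · have hφ' := hφ (t₀ + τ / σ)
    rw [unscale] at hφ'
    refine ((h.hasDerivAt_angles hφ').scomp τ (time τ)).congr_deriv ?_
    rw [inv_smul_smul₀ hσ]

theorem snd_eq_of_tendsto (h : RescalesTo Rψ Rφ ϑ κ σ α β H) (hσ : σ ≠ 0) {x Y : ℝ → ℝ × ℝ × ℝ}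
    {z : ℝ → ℝ} (hzx : IsTrajectory H z x) (hY : IsBaseTrajectory H w Y)
    (hlim : Tendsto (fun τ => x τ - Y τ) atTop (𝓝 0)) (τ : ℝ) : (x τ).2 = (Y τ).2 := by
  have hrot (p) : (H p).2.2 = σ⁻¹ • (β, α) := by rw [← h.rotation p, inv_smul_smul₀ hσ]
  let proj := ContinuousLinearMap.snd ℝ ℝ (ℝ × ℝ)
  refine congrFun (eq_of_hasDerivAt_eq_of_tendsto (u := fun s => (x s).2) (v := fun s => (Y s).2)
    (f := fun _ => σ⁻¹ • (β, α)) (fun s => ?_) (fun s => ?_) ?_) τ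
  · exact (proj.hasFDerivAt.comp_hasDerivAt s (hzx.hasDerivAt_snd s)).congr_deriv (hrot _)
  · exact (proj.hasFDerivAt.comp_hasDerivAt s (hY s)).congr_deriv (hrot _)
  · simpa [Function.comp_def] using (continuous_snd.tendsto _).comp hlim

theorem exists_asymptoticPhase (h : RescalesTo Rψ Rφ ϑ κ σ α β H) (hH : StripPerturbation H ρ)
    (hw : InvariantManifold H ρ w) (hκ : 0 < κ) (hσ : σ ≠ 0) {t₀ : ℝ}
    (hψ : ∀ t, HasDerivAt ψf (Rψ (ψf t) (φf t) t) t)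
    (hφ : ∀ t, HasDerivAt φf (Rφ (ψf t) (φf t) t) t) (h0 : |ψf t₀ - ϑ| ≤ κ * ρ) :
    ∃ φb : ℝ → ℝ,
      (∀ t, HasDerivAt φb (Rφ (ϑ + κ * w (φb t, β * t, α * t)) (φb t) t) t) ∧
      ∀ t, 0 ≤ σ * (t - t₀) →
        |(ψf t - ϑ) / κ - w (φb t, β * t, α * t)| ≤
          2 * (|(ψf t₀ - ϑ) / κ - w (φf t₀, β * t₀, α * t₀)| * exp (-(7 / 8) * (σ * (t - t₀)))) ∧
        |φf t - φb t| ≤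
          |(ψf t₀ - ϑ) / κ - w (φf t₀, β * t₀, α * t₀)| * exp (-(7 / 8) * (σ * (t - t₀))) := by
  have hzx := h.isTrajectory hκ.ne' hσ hψ hφ t₀
  have h0' : |(ψf (t₀ + 0 / σ) - ϑ) / κ| ≤ ρ := by
    rwa [zero_div, add_zero, abs_div, abs_of_pos hκ, div_le_iff₀' hκ]
  obtain ⟨Y, hY, hclose⟩ := hH.exists_asymptoticPhase hw hzx h0'
  have hlim : Tendsto (fun τ => exp (-(7 / 8) * τ)) atTop (𝓝 0) :=
    tendsto_exp_atBot.comp (tendsto_id.const_mul_atTop_of_neg (by norm_num))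
  have hsnd := h.snd_eq_of_tendsto hσ hzx hY <| squeeze_zero_norm'
    ((eventually_ge_atTop 0).mono fun τ hτ => (hclose τ hτ).2) (by simpa using hlim.const_mul _)
  have time (t : ℝ) : t₀ + σ * (t - t₀) / σ = t := by field_simp; ring
  have hYt (t : ℝ) : Y (σ * (t - t₀)) = ((Y (σ * (t - t₀))).1, β * t, α * t) :=
    Prod.ext rfl (by simpa only [time] using (hsnd (σ * (t - t₀))).symm)
  refine ⟨fun t => (Y (σ * (t - t₀))).1, fun t => ?_, fun t ht => ?_⟩
  · have hσt : HasDerivAt (fun t => σ * (t - t₀)) σ t := by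
      simpa using ((hasDerivAt_id t).sub_const t₀).const_mul σ
    refine ((ContinuousLinearMap.fst ℝ ℝ (ℝ × ℝ)).hasFDerivAt.comp_hasDerivAt t
      ((hY _).scomp t hσt)).congr_deriv ?_
    rw [h.fast, ← hYt t]
    rfl
  · obtain ⟨hz, hx⟩ := hclose _ ht
    simp only [time, zero_div, add_zero] at hz hx
    rw [← hYt t]
    exact ⟨hz, (norm_fst_le ((φf t, β * t, α * t) - Y (σ * (t - t₀)))).trans hx⟩

theorem expApproaches (h : RescalesTo Rψ Rφ ϑ κ σ α β H) (hH : StripPerturbation H ρ)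
    (hw : InvariantManifold H ρ w) (hκ : 0 < κ) (hκ1 : κ ≤ 1) (hσ : σ ≠ 0) :
    ExpApproaches Rψ Rφ (fun φ t => ϑ + κ * w (φ, β * t, α * t)) ϑ (κ * ρ) (3 / κ)
      (-(7 / 8) * σ) fun t₀ t => 0 ≤ σ * (t - t₀) := fun ψf φf t₀ hψ hφ h0 => by
  obtain ⟨φb, hφb, hclose⟩ := h.exists_asymptoticPhase hH hw hκ hσ hψ hφ h0
  refine ⟨φb, hφb, fun t ht => ?_⟩
  obtain ⟨hz, hx⟩ := hclose t ht
  have scaled (s : ℝ) : |ψf s - (ϑ + κ * w (φb s, β * s, α * s))| =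
      κ * |(ψf s - ϑ) / κ - w (φb s, β * s, α * s)| := by
    rw [← abs_of_pos hκ, ← abs_mul, abs_of_pos hκ]
    congr 1
    field_simp
    ring
  set d := |(ψf t₀ - ϑ) / κ - w (φb t₀, β * t₀, α * t₀)|
  set d' := |(ψf t₀ - ϑ) / κ - w (φf t₀, β * t₀, α * t₀)|
  have hd : d' ≤ d + |φf t₀ - φb t₀| := by
    have := hw.abs_sub_le (φb t₀, β * t₀, α * t₀) (φf t₀, β * t₀, α * t₀)
    rw [Prod.mk_sub_mk, sub_self, Prod.norm_mk, norm_zero, max_eq_left (norm_nonneg _),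
      norm_sub_rev, norm_eq_abs] at this
    linarith [abs_sub_le ((ψf t₀ - ϑ) / κ) (w (φb t₀, β * t₀, α * t₀))
      (w (φf t₀, β * t₀, α * t₀))]
  have hκd : κ * d' ≤ κ * d + |φf t₀ - φb t₀| := by
    nlinarith [abs_nonneg (φf t₀ - φb t₀)]
  rw [scaled, scaled, mul_assoc (-(7 / 8)) σ]
  set e := exp (-(7 / 8) * (σ * (t - t₀)))
  calc κ * |(ψf t - ϑ) / κ - w (φb t, β * t, α * t)| + |φf t - φb t|
      ≤ 1 * (2 * (d' * e)) + d' * e := by gcongr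
    _ = 3 / κ * e * (κ * d') := by field_simp; ring
    _ ≤ 3 / κ * e * (κ * d + |φf t₀ - φb t₀|) := by gcongr

end RescalesTo

end PlanarSystem

section PhaseField

/-- `κ` and `ρ` are chosen so small that with `ψ = ϑ + κ * z`, `|z| ≤ ρ`, the field `G` is nearly
linear in `z` and the drift `Sb` of the fast phase nearly constant, relative to `G'(ϑ)`. -/
structure PhaseScale (G Sb : ℝ → ℝ) (ϑ κ ρ : ℝ) : Prop where
  contDiff_slow : ContDiff ℝ 1 G
  contDiff_fast : ContDiff ℝ 1 Sb
  deriv_ne_zero : deriv G ϑ ≠ 0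
  scale_pos : 0 < κ
  scale_le_one : κ ≤ 1
  radius_pos : 0 < ρ
  abs_one_sub_le : ∀ z, |z| ≤ ρ → |1 - deriv G (ϑ + κ * z) / deriv G ϑ| ≤ 1 / 32
  abs_deriv_le : ∀ z, κ * |deriv Sb z| ≤ 1 / 32 * |deriv G ϑ|

theorem exists_phaseScale {G Sb : ℝ → ℝ} {ϑ M : ℝ} (hG : ContDiff ℝ 1 G) (hϑ : deriv G ϑ ≠ 0)
    (hSb : ContDiff ℝ 1 Sb) (hSb' : BddWithDeriv Sb M) : ∃ κ ρ, PhaseScale G Sb ϑ κ ρ := by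
  have := abs_pos.2 hϑ
  have : 0 ≤ M := (abs_nonneg _).trans (hSb' 0).1
  obtain ⟨c, hc, hcM⟩ := exists_pos_mul_lt (show 0 < 1 / 32 * |deriv G ϑ| by positivity) M
  set κ := min 1 c
  have hκ : 0 < κ := lt_min one_pos hc
  have hcont : ContinuousAt (fun z => |1 - deriv G (ϑ + κ * z) / deriv G ϑ|) 0 := by
    have := hG.continuous_deriv le_rfl
    fun_prop
  have hev := hcont.eventually_lt continuousAt_const
    (show |1 - deriv G (ϑ + κ * 0) / deriv G ϑ| < 1 / 32 by simp [hϑ])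
  obtain ⟨r, hr, hball⟩ := Metric.eventually_nhds_iff_ball.1 hev
  refine ⟨κ, r / 2, hG, hSb, hϑ, hκ, min_le_left _ _, half_pos hr, fun z hz => (hball z ?_).le,
    fun z => ?_⟩
  · rw [mem_ball_zero_iff, norm_eq_abs]
    linarith
  · calc κ * |deriv Sb z| ≤ c * M := by
          gcongr
          · exact min_le_right _ _
          · simpa [← norm_deriv_eq_norm_fderiv] using (hSb' z).2
      _ ≤ 1 / 32 * |deriv G ϑ| := by linarith

/-- The right-hand side for `z = (ψ - ϑ) / κ` and the angles `(φ₂, βt, αt)` in the time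
`-G'(ϑ) μ² t`, which turns the linear part into `-z`. Here `ω` is the constant part of the fast
frequency, and `f₁`, `f₂` collect the small terms of the two equations; everything is divided
by `μ²`. -/
noncomputable def phaseField (G Sb : ℝ → ℝ) (ϑ κ ω : ℝ) (f₁ f₂ : ℝ × ℝ × ℝ × ℝ → ℝ) (b : ℝ × ℝ) :
    ℝ × ℝ × ℝ × ℝ → ℝ × ℝ × ℝ × ℝ :=
  forcedField (fun z => z - (G (ϑ + κ * z) - G ϑ) / (κ * deriv G ϑ))
    (fun z => -(ω + Sb (ϑ + κ * z)) / deriv G ϑ) (fun p => -(κ * deriv G ϑ)⁻¹ * f₁ p)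
    (fun p => -(deriv G ϑ)⁻¹ * f₂ p) b

theorem hasDerivAt_comp_const_add_mul {f : ℝ → ℝ} (hf : Differentiable ℝ f) (ϑ κ z : ℝ) :
    HasDerivAt (fun z => f (ϑ + κ * z)) (deriv f (ϑ + κ * z) * κ) z :=
  (hf _).hasDerivAt.comp z ((hasDerivAt_const_mul κ).const_add ϑ)

namespace PhaseScale

variable {G Sb : ℝ → ℝ} {ϑ κ ρ ω q q' : ℝ} {f₁ f₂ g₁ g₂ : ℝ × ℝ × ℝ × ℝ → ℝ} {b : ℝ × ℝ}
  {w w₀ : ℝ × ℝ × ℝ → ℝ}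

theorem abs_deriv_slow_le (h : PhaseScale G Sb ϑ κ ρ) {z : ℝ} (hz : |z| ≤ ρ) :
    |deriv (fun z => z - (G (ϑ + κ * z) - G ϑ) / (κ * deriv G ϑ)) z| ≤ 1 / 32 := by
  have := h.scale_pos.ne'
  have hd := (hasDerivAt_id z).fun_sub (((hasDerivAt_comp_const_add_mul
    (h.contDiff_slow.differentiable one_ne_zero) ϑ κ z).sub_const (G ϑ)).div_const
      (κ * deriv G ϑ))
  refine (congrArg abs (hd.deriv.trans ?_)).trans_le (h.abs_one_sub_le z hz)
  field_simp

theorem abs_deriv_fast_le (h : PhaseScale G Sb ϑ κ ρ) (ω z : ℝ) :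
    |deriv (fun z => -(ω + Sb (ϑ + κ * z)) / deriv G ϑ) z| ≤ 1 / 32 := by
  have hd := ((hasDerivAt_comp_const_add_mul
    (h.contDiff_fast.differentiable one_ne_zero) ϑ κ z).const_add ω).fun_neg.div_const (deriv G ϑ)
  rw [hd.deriv, abs_div, abs_neg, abs_mul, abs_of_pos h.scale_pos,
    div_le_iff₀ (abs_pos.2 h.deriv_ne_zero), mul_comm]
  exact h.abs_deriv_le _

theorem forcing_slow (h : PhaseScale G Sb ϑ κ ρ) (hf : Forcing f₁ q) :
    Forcing (fun p => -(κ * deriv G ϑ)⁻¹ * f₁ p) (q / (κ * |deriv G ϑ|)) := by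
  convert hf.const_mul (-(κ * deriv G ϑ)⁻¹) using 1
  rw [abs_neg, abs_inv, abs_mul, abs_of_pos h.scale_pos, div_eq_inv_mul]

theorem forcing_fast (h : PhaseScale G Sb ϑ κ ρ) (hf : Forcing f₂ q) :
    Forcing (fun p => -(deriv G ϑ)⁻¹ * f₂ p) (q / (κ * |deriv G ϑ|)) := by
  refine (hf.const_mul (-(deriv G ϑ)⁻¹)).mono ?_
  have hq : 0 ≤ q := (abs_nonneg _).trans (hf.bddWithDeriv 0).1
  have hg := abs_pos.2 h.deriv_ne_zero
  rw [abs_neg, abs_inv, ← div_eq_inv_mul]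
  exact div_le_div_of_nonneg_left hq (mul_pos h.scale_pos hg)
    (mul_le_of_le_one_left hg.le h.scale_le_one)

theorem stripPerturbation (h : PhaseScale G Sb ϑ κ ρ) (hf₁ : Forcing f₁ q) (hf₂ : Forcing f₂ q)
    (hq : q ≤ min (1 / 32) (ρ / 2) * (κ * |deriv G ϑ|)) :
    StripPerturbation (phaseField G Sb ϑ κ ω f₁ f₂ b) ρ := by
  have hG := h.contDiff_slow
  have hSb := h.contDiff_fast
  rw [← div_le_iff₀ (mul_pos h.scale_pos (abs_pos.2 h.deriv_ne_zero)), le_min_iff] at hq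
  exact stripPerturbation_forcedField h.radius_pos (by fun_prop) (by fun_prop)
    (h.forcing_slow hf₁) (h.forcing_fast hf₂) (by simp) (fun z hz => h.abs_deriv_slow_le hz)
    (fun z _ => h.abs_deriv_fast_le ω z) hq.1 hq.2

theorem abs_mul_le (h : PhaseScale G Sb ϑ κ ρ) (hf₁ : Forcing f₁ q)
    (hF : StripPerturbation (phaseField G Sb ϑ κ ω f₁ f₂ b) ρ)
    (hw : InvariantManifold (phaseField G Sb ϑ κ ω f₁ f₂ b) ρ w) (x : ℝ × ℝ × ℝ) :
    |κ * w x| ≤ q * (3 / |deriv G ϑ|) := by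
  have hw' := hw.abs_le_of_abs_fst_zero_le hF (ν := q / (κ * |deriv G ϑ|))
    (fun x => by simpa [phaseField, forcedField] using ((h.forcing_slow hf₁).bddWithDeriv (0, x)).1)
    x
  have hκ := h.scale_pos
  rw [abs_mul, abs_of_pos hκ]
  exact (mul_le_mul_of_nonneg_left hw' hκ.le).trans_eq (by field_simp)

theorem abs_mul_sub_le (h : PhaseScale G Sb ϑ κ ρ) (hg₁ : Forcing g₁ q) (hg₂ : Forcing g₂ q)
    (hF : StripPerturbation
      (phaseField G Sb ϑ κ ω (fun p => f₁ p + g₁ p) (fun p => f₂ p + g₂ p) b) ρ)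
    (hw : InvariantManifold
      (phaseField G Sb ϑ κ ω (fun p => f₁ p + g₁ p) (fun p => f₂ p + g₂ p) b) ρ w)
    (hw₀ : InvariantManifold (phaseField G Sb ϑ κ ω f₁ f₂ b) ρ w₀) (x : ℝ × ℝ × ℝ) :
    |κ * (w x - w₀ x)| ≤ q * (3 / |deriv G ϑ|) := by
  have hsub := hw.abs_sub_le_of_norm_sub_le hF hw₀ (ν := q / (κ * |deriv G ϑ|)) (fun p _ => by
    simpa only [phaseField, mul_add] using norm_forcedField_add_sub_le
      ((h.forcing_slow hg₁).bddWithDeriv p).1 ((h.forcing_fast hg₂).bddWithDeriv p).1) x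
  have hκ := h.scale_pos
  rw [abs_mul, abs_of_pos hκ]
  exact (mul_le_mul_of_nonneg_left hsub hκ.le).trans_eq (by field_simp)

theorem periodic_phaseField {v : ℝ × ℝ × ℝ} (hf₁ : Function.Periodic f₁ (0, v))
    (hf₂ : Function.Periodic f₂ (0, v)) :
    Function.Periodic (phaseField G Sb ϑ κ ω f₁ f₂ b) (0, v) :=
  periodic_forcedField (fun p => by simp only [hf₁ p]) fun p => by simp only [hf₂ p]

end PhaseScale

end PhaseField

section SlowPhase

theorem exists_forall_sq_add_sq_add_cube_div_le {η : ℝ} (hη : 0 < η) :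
    ∃ m > 0, ∀ μ ε : ℝ, 0 < μ → μ ≤ m → 0 < ε → ε ≤ m * μ ^ ((1 : ℝ) / 3) →
      μ ^ 2 + (ε ^ 2 + ε ^ 3 / μ) ≤ η := by
  refine ⟨min 1 (η / 3), by positivity, fun μ ε hμ hμm hε hεm => ?_⟩
  set m := min 1 (η / 3)
  have hm : 0 < m := hμ.trans_le hμm
  have hm1 : m ≤ 1 := min_le_left _ _
  have hroot : μ ^ ((1 : ℝ) / 3) ≤ 1 := rpow_le_one hμ.le (hμm.trans hm1) (by norm_num)
  have hcube : (μ ^ ((1 : ℝ) / 3)) ^ 3 = μ := by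
    rw [← rpow_natCast, ← rpow_mul hμ.le]
    norm_num
  have hμ2 : μ ^ 2 ≤ m := by nlinarith
  have hεm' : ε ≤ m := hεm.trans (mul_le_of_le_one_right hm.le hroot)
  have hε2 : ε ^ 2 ≤ m := by nlinarith
  have hε3 : ε ^ 3 / μ ≤ m := by
    rw [div_le_iff₀ hμ]
    calc ε ^ 3 ≤ (m * μ ^ ((1 : ℝ) / 3)) ^ 3 := by gcongr
      _ = m ^ 3 * μ := by rw [mul_pow, hcube]
      _ ≤ m * μ := by
        gcongr
        exact pow_le_of_le_one hm.le hm1 three_ne_zero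
  linarith [min_le_right 1 (η / 3)]

/-- The terms of the system with coefficient `μ⁴`, divided by `μ²`, at `ψ = ϑ + κ * z`. -/
def slowPart (S : ℝ × ℝ × ℝ → ℝ) (ϑ κ μ : ℝ) (p : ℝ × ℝ × ℝ × ℝ) : ℝ :=
  μ ^ 2 * S (ϑ + κ * p.1, p.2.2.1, μ)

/-- The terms of the system with coefficients `ε²μ²` and `ε³μ`, divided by `μ²`, at
`ψ = ϑ + κ * z`. -/
noncomputable def fastPart (S S' : ℝ × ℝ × ℝ × ℝ × ℝ × ℝ → ℝ) (ϑ κ μ ε : ℝ)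
    (p : ℝ × ℝ × ℝ × ℝ) : ℝ :=
  ε ^ 2 * S (ϑ + κ * p.1, p.2.1, p.2.2.1, p.2.2.2, μ, ε) +
    ε ^ 3 / μ * S' (ϑ + κ * p.1, p.2.1, p.2.2.1, p.2.2.2, μ, ε)

variable {ϑ κ μ ε M : ℝ}

theorem SlowTerm.forcing_slowPart {S : ℝ × ℝ × ℝ → ℝ} (hS : SlowTerm S M) (hκ : |κ| ≤ 1)
    (ϑ μ : ℝ) : Forcing (slowPart S ϑ κ μ) (μ ^ 2 * M) := by
  have := (hS.forcing hκ ϑ μ).const_mul (μ ^ 2)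
  rwa [abs_sq] at this

theorem FastTerm.forcing_fastPart {S S' : ℝ × ℝ × ℝ × ℝ × ℝ × ℝ → ℝ} (hS : FastTerm S M)
    (hS' : FastTerm S' M) (hκ : |κ| ≤ 1) (ϑ : ℝ) (hμ : 0 < μ) (hε : 0 < ε) :
    Forcing (fastPart S S' ϑ κ μ ε) ((ε ^ 2 + ε ^ 3 / μ) * M) := by
  have := ((hS.forcing hκ ϑ μ ε).const_mul (ε ^ 2)).add
    ((hS'.forcing hκ ϑ μ ε).const_mul (ε ^ 3 / μ))
  rwa [abs_sq, abs_of_pos (by positivity), ← add_mul] at this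

theorem periodic_slowPart (S : ℝ × ℝ × ℝ → ℝ) (a c : ℝ) :
    Function.Periodic (slowPart S ϑ κ μ) (0, a, 0, c) := fun p => by simp [slowPart]

/-- The field `phaseField` of the slow phase system. -/
noncomputable def fullField (G Sb : ℝ → ℝ) (S₁ S₂ : ℝ × ℝ × ℝ → ℝ)
    (T₁ T₁' T₂ T₂' : ℝ × ℝ × ℝ × ℝ × ℝ × ℝ → ℝ) (ϑ κ α₀ α β μ ε : ℝ) :
    ℝ × ℝ × ℝ × ℝ → ℝ × ℝ × ℝ × ℝ :=
  phaseField G Sb ϑ κ (α₀ / μ ^ 2) (fun p => slowPart S₁ ϑ κ μ p + fastPart T₁ T₁' ϑ κ μ ε p)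
    (fun p => slowPart S₂ ϑ κ μ p + fastPart T₂ T₂' ϑ κ μ ε p) ((-deriv G ϑ * μ ^ 2)⁻¹ • (β, α))

theorem rescalesTo_fullField {G : ℝ → ℝ} (hϑ : deriv G ϑ ≠ 0) (hκ : κ ≠ 0) (hμ : μ ≠ 0)
    (Sb : ℝ → ℝ) (S₁ S₂ : ℝ × ℝ × ℝ → ℝ) (T₁ T₁' T₂ T₂' : ℝ × ℝ × ℝ × ℝ × ℝ × ℝ → ℝ)
    (α₀ α β ε : ℝ) :
    RescalesTo (RHSψ G S₁ T₁ T₁' (G ϑ) α β μ ε) (RHSφ α₀ Sb S₂ T₂ T₂' α β μ ε) ϑ κ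
      (-deriv G ϑ * μ ^ 2) α β (fullField G Sb S₁ S₂ T₁ T₁' T₂ T₂' ϑ κ α₀ α β μ ε) where
  slow z φ t := by
    simp only [RHSψ, fullField, phaseField, forcedField, slowPart, fastPart]
    field_simp
    ring
  fast z φ t := by
    simp only [RHSφ, fullField, phaseField, forcedField, slowPart, fastPart]
    field_simp
    ring
  rotation _ := smul_inv_smul₀ (mul_ne_zero (neg_ne_zero.2 hϑ) (pow_ne_zero 2 hμ)) _

/-- `u` and `u₀` are the offsets from `ϑ` of the integral manifolds of the full system, and of the
system in which only the terms of order `μ⁴` are kept. -/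
structure SplitOffset (u u₀ : ℝ × ℝ × ℝ → ℝ) (C μ ε : ℝ) : Prop where
  contDiff : ContDiff ℝ 1 u
  contDiff_slow : ContDiff ℝ 1 u₀
  periodic : ∀ k ∈ anglePeriods, Function.Periodic u k
  periodic_slow : Function.Periodic u₀ (0, 2 * π, 0)
  slow_eq : ∀ φ b a, u₀ (φ, b, a) = u₀ (0, b, 0)
  abs_slow_le : ∀ x, |u₀ x| ≤ μ ^ 2 * C
  abs_sub_le : ∀ x, |u x - u₀ x| ≤ (ε ^ 2 + ε ^ 3 / μ) * C

theorem SplitOffset.exists_coefficients {u u₀ : ℝ × ℝ × ℝ → ℝ} {C : ℝ} (hμ : 0 < μ) (hε : 0 < ε)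
    (h : SplitOffset u u₀ C μ ε) :
    ∃ (v₀ : ℝ × ℝ → ℝ) (v₁ : ℝ × ℝ × ℝ × ℝ × ℝ → ℝ), ContDiff ℝ 1 v₀ ∧ ContDiff ℝ 1 v₁ ∧
      (∀ b m, v₀ (b + 2 * π, m) = v₀ (b, m)) ∧ Per3of5 v₁ ∧ (∀ p, |v₀ p| ≤ C) ∧
      (∀ p, |v₁ p| ≤ C) ∧
      ∀ ϑ α β, graphψ ϑ v₀ v₁ v₁ α β μ ε = fun φ t => ϑ + u (φ, β * t, α * t) := by
  have hu := h.contDiff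
  have hu₀ := h.contDiff_slow
  have hμ2 : 0 < μ ^ 2 := by positivity
  have hfast : 0 < ε ^ 2 + ε ^ 3 / μ := by positivity
  refine ⟨fun p => u₀ (0, p.1, 0) / μ ^ 2,
    fun p => (u (p.1, p.2.1, p.2.2.1) - u₀ (p.1, p.2.1, p.2.2.1)) / (ε ^ 2 + ε ^ 3 / μ),
    by fun_prop, by fun_prop, fun b m => ?_, fun φ b a d e => ?_, fun p => ?_, fun p => ?_,
    fun ϑ α β => ?_⟩
  · simpa using congrArg (· / μ ^ 2) (h.periodic_slow (0, b, 0))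
  · have h₀ : u₀ (0, b + 2 * π, 0) = u₀ (0, b, 0) := by simpa using h.periodic_slow (0, b, 0)
    have h₁ := h.periodic (2 * π, 0, 0) (by simp [anglePeriods]) (φ, b, a)
    have h₂ := h.periodic (0, 2 * π, 0) (by simp [anglePeriods]) (φ, b, a)
    have h₃ := h.periodic (0, 0, 2 * π) (by simp [anglePeriods]) (φ, b, a)
    simp only [Prod.mk_add_mk, add_zero] at h₁ h₂ h₃
    simp only [h.slow_eq _ _ a, h.slow_eq _ _ (a + 2 * π), h₀, h₁, h₂, h₃, and_self]
  · rw [abs_div, abs_of_pos hμ2, div_le_iff₀' hμ2]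
    exact h.abs_slow_le _
  · rw [abs_div, abs_of_pos hfast, div_le_iff₀' hfast]
    exact h.abs_sub_le _
  · funext φ t
    simp only [graphψ, ← h.slow_eq φ _ (α * t)]
    field_simp
    ring

theorem PhaseScale.exists_invariantManifold_fullField {G Sb : ℝ → ℝ} {ρ : ℝ}
    (h : PhaseScale G Sb ϑ κ ρ) {S₁ S₂ : ℝ × ℝ × ℝ → ℝ}
    {T₁ T₁' T₂ T₂' : ℝ × ℝ × ℝ × ℝ × ℝ × ℝ → ℝ} (hS₁ : SlowTerm S₁ M) (hS₂ : SlowTerm S₂ M)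
    (hT₁ : FastTerm T₁ M) (hT₁' : FastTerm T₁' M) (hT₂ : FastTerm T₂ M) (hT₂' : FastTerm T₂' M)
    (α₀ α β : ℝ) (hμ : 0 < μ) (hε : 0 < ε)
    (hq : (μ ^ 2 + (ε ^ 2 + ε ^ 3 / μ)) * M ≤ min (1 / 32) (ρ / 2) * (κ * |deriv G ϑ|)) :
    ∃ w w₀ : ℝ × ℝ × ℝ → ℝ,
      StripPerturbation (fullField G Sb S₁ S₂ T₁ T₁' T₂ T₂' ϑ κ α₀ α β μ ε) ρ ∧
      InvariantManifold (fullField G Sb S₁ S₂ T₁ T₁' T₂ T₂' ϑ κ α₀ α β μ ε) ρ w ∧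
      SplitOffset (fun x => κ * w x) (fun x => κ * w₀ x) (M * (3 / |deriv G ϑ|)) μ ε := by
  have hκ : |κ| ≤ 1 := by simpa [abs_of_pos h.scale_pos] using h.scale_le_one
  have hM : 0 ≤ M := (abs_nonneg _).trans (hS₁.bddWithDeriv 0).1
  have hf₁ := hS₁.forcing_slowPart hκ ϑ μ
  have hf₂ := hS₂.forcing_slowPart hκ ϑ μ
  have hg₁ := hT₁.forcing_fastPart hT₁' hκ ϑ hμ hε
  have hg₂ := hT₂.forcing_fastPart hT₂' hκ ϑ hμ hε
  have hfg₁ := hf₁.add hg₁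
  have hfg₂ := hf₂.add hg₂
  have hF : StripPerturbation (fullField G Sb S₁ S₂ T₁ T₁' T₂ T₂' ϑ κ α₀ α β μ ε) ρ :=
    h.stripPerturbation hfg₁ hfg₂ (by rwa [← add_mul])
  have hF₀ : StripPerturbation (phaseField G Sb ϑ κ (α₀ / μ ^ 2) (slowPart S₁ ϑ κ μ)
      (slowPart S₂ ϑ κ μ) ((-deriv G ϑ * μ ^ 2)⁻¹ • (β, α))) ρ :=
    h.stripPerturbation hf₁ hf₂ <| hq.trans' <|
      mul_le_mul_of_nonneg_right (le_add_of_nonneg_right (by positivity)) hM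
  obtain ⟨w, hw⟩ := hF.exists_invariantManifold
  obtain ⟨w₀, hw₀⟩ := hF₀.exists_invariantManifold
  refine ⟨w, w₀, hF, hw, contDiff_const.mul hw.contDiff, contDiff_const.mul hw₀.contDiff,
    fun k hk x => ?_, fun x => ?_, fun φ b a => ?_, fun x => ?_, fun x => ?_⟩
  · rw [hw.periodic hF (periodic_phaseField (hfg₁.periodic k hk) (hfg₂.periodic k hk)) x]
  · have hk : (0, 2 * π, 0) ∈ anglePeriods := by simp [anglePeriods]
    rw [hw₀.periodic hF₀ (periodic_phaseField (hf₁.periodic _ hk) (hf₂.periodic _ hk)) x]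
  · have := hw₀.periodic hF₀ (v := (φ, 0, a))
      (periodic_phaseField (periodic_slowPart S₁ φ a) (periodic_slowPart S₂ φ a)) (0, b, 0)
    simpa using congrArg (κ * ·) this
  · simpa only [mul_assoc] using h.abs_mul_le hf₁ hF₀ hw₀ x
  · simpa only [mul_assoc, mul_sub] using h.abs_mul_sub_le hg₁ hg₂ hF hw hw₀ x

theorem Per2of3.slowTerm {S : ℝ × ℝ × ℝ → ℝ} (h : Per2of3 S) (hS : ContDiff ℝ 1 S)
    (hS' : BddWithDeriv S M) : SlowTerm S M :=
  ⟨hS, fun ⟨a, b, c⟩ => by simpa using (h a b c).2, hS'⟩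

theorem Per4of6.fastTerm {S : ℝ × ℝ × ℝ × ℝ × ℝ × ℝ → ℝ} (h : Per4of6 S) (hS : ContDiff ℝ 1 S)
    (hS' : BddWithDeriv S M) : FastTerm S M := by
  refine ⟨hS, ?_, hS'⟩
  rintro k (rfl | rfl | rfl) ⟨a, b, c, d, e, f⟩ <;> simp [h a b c d e f]

theorem slow_phase_integral_manifolds_general (α₀ : ℝ) {G S21bar : ℝ → ℝ} (hG : ContDiff ℝ 1 G)
    {Δ ϑ0 : ℝ} (hϑ0 : G ϑ0 = Δ) (hϑ0' : deriv G ϑ0 ≠ 0) {S11 S21 : ℝ × ℝ × ℝ → ℝ}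
    {S12 S13 S22 S23 : ℝ × ℝ × ℝ × ℝ × ℝ × ℝ → ℝ} {MS : ℝ}
    (hS11 : SlowTerm S11 MS) (hS21 : SlowTerm S21 MS) (hS21bar : ContDiff ℝ 1 S21bar)
    (hS21bar' : BddWithDeriv S21bar MS) (hS12 : FastTerm S12 MS) (hS13 : FastTerm S13 MS)
    (hS22 : FastTerm S22 MS) (hS23 : FastTerm S23 MS) :
    ∃ μ₀ > (0 : ℝ), ∃ c₀ > (0 : ℝ), ∃ M₃ > (0 : ℝ), ∃ δ₀ > (0 : ℝ), ∃ L ≥ (1 : ℝ), ∃ r > (0 : ℝ),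
    ∀ α β μ ε : ℝ, 0 < μ → μ ≤ μ₀ → 0 < ε → ε ≤ c₀ * μ ^ ((1 : ℝ) / 3) →
      ∃ (v₀ : ℝ × ℝ → ℝ) (v₁ v₂ : ℝ × ℝ × ℝ × ℝ × ℝ → ℝ),
        ContDiff ℝ 1 v₀ ∧ ContDiff ℝ 1 v₁ ∧ ContDiff ℝ 1 v₂ ∧
        (∀ a b : ℝ, v₀ (a + 2 * π, b) = v₀ (a, b)) ∧ Per3of5 v₁ ∧ Per3of5 v₂ ∧
        (∀ p, |v₀ p| ≤ M₃) ∧ (∀ p, |v₁ p| ≤ M₃) ∧ (∀ p, |v₂ p| ≤ M₃) ∧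
        IsIntegralManifold (RHSψ G S11 S12 S13 Δ α β μ ε)
          (RHSφ α₀ S21bar S21 S22 S23 α β μ ε) (graphψ ϑ0 v₀ v₁ v₂ α β μ ε) ∧
        (deriv G ϑ0 < 0 → ExpApproaches (RHSψ G S11 S12 S13 Δ α β μ ε)
          (RHSφ α₀ S21bar S21 S22 S23 α β μ ε) (graphψ ϑ0 v₀ v₁ v₂ α β μ ε) ϑ0 δ₀ L
          (-μ ^ 2 * r) fun t₀ t => t₀ ≤ t) ∧
        (0 < deriv G ϑ0 → ExpApproaches (RHSψ G S11 S12 S13 Δ α β μ ε)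
          (RHSφ α₀ S21bar S21 S22 S23 α β μ ε) (graphψ ϑ0 v₀ v₁ v₂ α β μ ε) ϑ0 δ₀ L
          (μ ^ 2 * r) fun t₀ t => t ≤ t₀) := by
  subst hϑ0
  obtain ⟨κ, ρ, hscale⟩ := exists_phaseScale hG hϑ0' hS21bar hS21bar'
  have hκ := hscale.scale_pos
  have hρ := hscale.radius_pos
  have := abs_pos.2 hϑ0'
  have hMS : 0 ≤ MS := (abs_nonneg _).trans (hS21bar' 0).1
  obtain ⟨η, hη, hηq⟩ := exists_pos_mul_lt
    (show 0 < min (1 / 32) (ρ / 2) * (κ * |deriv G ϑ0|) by positivity) MS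
  obtain ⟨m, hm, hsmall⟩ := exists_forall_sq_add_sq_add_cube_div_le hη
  refine ⟨m, hm, m, hm, MS * (3 / |deriv G ϑ0|) + 1, by positivity, κ * ρ, by positivity, 3 / κ,
    (one_le_div hκ).2 (by linarith [hscale.scale_le_one]), 7 / 8 * |deriv G ϑ0|, by positivity,
    fun α β μ ε hμ hμm hε hεm => ?_⟩
  have hq := (mul_le_mul_of_nonneg_left (hsmall μ ε hμ hμm hε hεm) hMS).trans hηq.le
  rw [mul_comm MS] at hq
  obtain ⟨w, w₀, hF, hw, hsplit⟩ := hscale.exists_invariantManifold_fullField hS11 hS21 hS12 hS13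
    hS22 hS23 α₀ α β hμ hε hq
  obtain ⟨v₀, v₁, hv₀, hv₁, hper₀, hper₁, hb₀, hb₁, hgraph⟩ := hsplit.exists_coefficients hμ hε
  have hR := rescalesTo_fullField hϑ0' hκ.ne' hμ.ne' S21bar S11 S21 S12 S13 S22 S23 α₀ α β ε
  have hE := hR.expApproaches hF hw hκ hscale.scale_le_one
    (mul_ne_zero (neg_ne_zero.2 hϑ0') (by positivity))
  refine ⟨v₀, v₁, v₁, hv₀, hv₁, hv₁, hper₀, hper₁, hper₁, fun p => (hb₀ p).trans (by simp),
    fun p => (hb₁ p).trans (by simp), fun p => (hb₁ p).trans (by simp), ?_, fun hneg => ?_,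
    fun hpos => ?_⟩
  · exact hgraph ϑ0 α β ▸ hR.isIntegralManifold hw
  · rw [hgraph, abs_of_neg hneg]
    convert hE.mono fun t₀ t ht => ?_ using 1
    · ring
    · exact mul_nonneg (mul_nonneg (neg_nonneg.2 hneg.le) (sq_nonneg μ)) (sub_nonneg.2 ht)
  · rw [hgraph, abs_of_pos hpos]
    convert hE.mono fun t₀ t ht => ?_ using 1
    · ring
    · exact mul_nonneg_of_nonpos_of_nonpos
        (mul_nonpos_of_nonpos_of_nonneg (neg_nonpos.2 hpos.le) (sq_nonneg μ)) (sub_nonpos.2 ht)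

end SlowPhase

end

/-- Lemma 6.1, abstract form: integral manifolds `ψ₂ = ϑ⁰ + v(φ₂, βt, αt, μ, ε)`
near a nondegenerate zero `ϑ⁰` of `G − Δ` for the slow phase system, exponentially stable if
`G′(ϑ⁰) < 0` and exponentially unstable if `G′(ϑ⁰) > 0`. -/
theorem slow_phase_integral_manifolds
    (α₀ β₀ : ℝ) (hα₀ : 0 < α₀) (hβ₀ : 0 < β₀)
    (G : ℝ → ℝ) (hG : ContDiff ℝ 1 G) (hGper : Function.Periodic G (2 * Real.pi))
    (Δ ϑ0 : ℝ) (hϑ0 : G ϑ0 = Δ) (hϑ0' : deriv G ϑ0 ≠ 0)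
    (S11 S21 : ℝ × ℝ × ℝ → ℝ) (S21bar : ℝ → ℝ)
    (S12 S13 S22 S23 : ℝ × ℝ × ℝ × ℝ × ℝ × ℝ → ℝ)
    (MS : ℝ)
    (hS11 : ContDiff ℝ 1 S11 ∧ Per2of3 S11 ∧ BddWithDeriv S11 MS)
    (hS21 : ContDiff ℝ 1 S21 ∧ Per2of3 S21 ∧ BddWithDeriv S21 MS)
    (hS21bar : ContDiff ℝ 1 S21bar ∧ Function.Periodic S21bar (2 * Real.pi) ∧
      BddWithDeriv S21bar MS)
    (hS12 : ContDiff ℝ 1 S12 ∧ Per4of6 S12 ∧ BddWithDeriv S12 MS)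
    (hS13 : ContDiff ℝ 1 S13 ∧ Per4of6 S13 ∧ BddWithDeriv S13 MS)
    (hS22 : ContDiff ℝ 1 S22 ∧ Per4of6 S22 ∧ BddWithDeriv S22 MS)
    (hS23 : ContDiff ℝ 1 S23 ∧ Per4of6 S23 ∧ BddWithDeriv S23 MS) :
    ∃ μ₀ > (0:ℝ), ∃ c₀ > (0:ℝ), ∃ M₃ > (0:ℝ), ∃ δ₀ > (0:ℝ),
    ∃ L₂ ≥ (1:ℝ), ∃ κ₂ > (0:ℝ), ∃ L₃ ≥ (1:ℝ), ∃ κ₃ > (0:ℝ),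
    ∀ α β μ ε : ℝ, α₀ ≤ α → 0 < β → 0 < μ → μ ≤ μ₀ → 0 < ε → ε ≤ c₀ * μ ^ ((1:ℝ)/3) →
      ∃ (v₀ : ℝ × ℝ → ℝ) (v₁ v₂ : ℝ × ℝ × ℝ × ℝ × ℝ → ℝ),
        ContDiff ℝ 1 v₀ ∧ ContDiff ℝ 1 v₁ ∧ ContDiff ℝ 1 v₂
        ∧ (∀ a b : ℝ, v₀ (a + 2 * Real.pi, b) = v₀ (a, b))
        ∧ Per3of5 v₁ ∧ Per3of5 v₂
        ∧ (∀ p, |v₀ p| ≤ M₃) ∧ (∀ p, |v₁ p| ≤ M₃) ∧ (∀ p, |v₂ p| ≤ M₃)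
        -- the graph `ψ₂ = ϑ0 + v(φ₂, βt, αt, μ, ε)` is an integral manifold:
        ∧ (∀ φf : ℝ → ℝ,
            (∀ t : ℝ, HasDerivAt φf (RHSφ α₀ S21bar S21 S22 S23 α β μ ε
                (graphψ ϑ0 v₀ v₁ v₂ α β μ ε (φf t) t) (φf t) t) t) →
            ∀ t : ℝ, HasDerivAt (fun s => graphψ ϑ0 v₀ v₁ v₂ α β μ ε (φf s) s)
              (RHSψ G S11 S12 S13 Δ α β μ ε
                (graphψ ϑ0 v₀ v₁ v₂ α β μ ε (φf t) t) (φf t) t) t)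
        -- exponential stability when `G′(ϑ0) < 0`:
        ∧ (deriv G ϑ0 < 0 →
            ∀ (ψf φf : ℝ → ℝ) (t₀ : ℝ),
              (∀ t : ℝ, HasDerivAt ψf
                (RHSψ G S11 S12 S13 Δ α β μ ε (ψf t) (φf t) t) t) →
              (∀ t : ℝ, HasDerivAt φf
                (RHSφ α₀ S21bar S21 S22 S23 α β μ ε (ψf t) (φf t) t) t) →
              |ψf t₀ - ϑ0| ≤ δ₀ →
              ∃ φb : ℝ → ℝ,
                (∀ t : ℝ, HasDerivAt φb (RHSφ α₀ S21bar S21 S22 S23 α β μ ε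
                    (graphψ ϑ0 v₀ v₁ v₂ α β μ ε (φb t) t) (φb t) t) t) ∧
                ∀ t : ℝ, t₀ ≤ t →
                  |ψf t - graphψ ϑ0 v₀ v₁ v₂ α β μ ε (φb t) t| + |φf t - φb t|
                    ≤ L₂ * Real.exp (-μ^2 * κ₂ * (t - t₀)) *
                      (|ψf t₀ - graphψ ϑ0 v₀ v₁ v₂ α β μ ε (φb t₀) t₀| + |φf t₀ - φb t₀|))
        -- exponential instability when `G′(ϑ0) > 0`:
        ∧ (0 < deriv G ϑ0 →
            ∀ (ψf φf : ℝ → ℝ) (t₀ : ℝ),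
              (∀ t : ℝ, HasDerivAt ψf
                (RHSψ G S11 S12 S13 Δ α β μ ε (ψf t) (φf t) t) t) →
              (∀ t : ℝ, HasDerivAt φf
                (RHSφ α₀ S21bar S21 S22 S23 α β μ ε (ψf t) (φf t) t) t) →
              |ψf t₀ - ϑ0| ≤ δ₀ →
              ∃ φb : ℝ → ℝ,
                (∀ t : ℝ, HasDerivAt φb (RHSφ α₀ S21bar S21 S22 S23 α β μ ε
                    (graphψ ϑ0 v₀ v₁ v₂ α β μ ε (φb t) t) (φb t) t) t) ∧
                ∀ t : ℝ, t ≤ t₀ →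
                  |ψf t - graphψ ϑ0 v₀ v₁ v₂ α β μ ε (φb t) t| + |φf t - φb t|
                    ≤ L₃ * Real.exp (μ^2 * κ₃ * (t - t₀)) *
                      (|ψf t₀ - graphψ ϑ0 v₀ v₁ v₂ α β μ ε (φb t₀) t₀| + |φf t₀ - φb t₀|)) := by
  obtain ⟨μ₀, hμ₀, c₀, hc₀, M₃, hM₃, δ₀, hδ₀, L, hL, r, hr, h⟩ :=
    slow_phase_integral_manifolds_general α₀ hG hϑ0 hϑ0' (hS11.2.1.slowTerm hS11.1 hS11.2.2)
      (hS21.2.1.slowTerm hS21.1 hS21.2.2) hS21bar.1 hS21bar.2.2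
      (hS12.2.1.fastTerm hS12.1 hS12.2.2) (hS13.2.1.fastTerm hS13.1 hS13.2.2)
      (hS22.2.1.fastTerm hS22.1 hS22.2.2) (hS23.2.1.fastTerm hS23.1 hS23.2.2)
  exact ⟨μ₀, hμ₀, c₀, hc₀, M₃, hM₃, δ₀, hδ₀, L, hL, r, hr, L, hL, r, hr,
    fun α β μ ε _ _ => h α β μ ε⟩
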